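/- (Han-Costa region without the common part) Let (S,T) be a discrete memoryless correlated source with finite alphabets and joint pmf p(s,t). Suppose there exist finite-valued auxiliary random variables W, U, V and a channel input X satisfying the Markov chain (S,T) -> (W,U,V) -> X -> (Y1,Y2), where Y1, Y2 are obtained from X through the broadcast channel p(y1,y2|x). If H(S) < I(S,W,U; Y1) - I(T; W,U | S), H(T) < I(T,W,V; Y2) - I(S; W,V | T), H(S,T) < min{I(W; Y1), I(W; Y2)} + I(S,U; Y1 | W) + I(T,V; Y2 | W) - I(S,U; T,V | W), and H(S,T) < I(S,W,U; Y1) + I(T,W,V; Y2) - I(S,U; T,V | W) - I(S,T; W), then the source pair (S,T) can be sent with arbitrarily small probability of error over the broadcast channel p(y1,y2|x). -/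

import Mathlib

/-!
The coding scheme is random superposition coding with a soft, likelihood-ratio version of joint
covering, so that no typical sequences are needed.

*One shot.*  Draw cloud centres `w_i` with law `q0` and, for every message `s`, satellites
`u_{s,i,j}` with law `q1(· | s, w_i)`, and for every `t` satellites `v_{t,i,k}` with law
`q2(· | t, w_i)`.  To send `(s, t)` one would like the triple `(w_i, u_{s,i,j}, v_{t,i,k})` to
follow the target law `κ(· | s, t)`.  Give each triple the weight `L = κ / (q0 q1 q2)`, cut off to
the event where the weight and its partial averages are not too large; by a second moment estimate
(`total_weight`) the total weight concentrates about its mean, so the weighted average of the errors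
of the individual triples is, up to a constant, the error under the target law.  An encoder that
picks the best channel input is no worse than this average (`error_fixed_source`).  A decoder
outputs a message having a codeword that passes its test (`exists_decoder`), and the expected number
of wrong candidates is small by a first moment estimate (`packing`).  `one_shot` averages over the
source and fixes a codebook; `one_shot_sub` extends it to codebook sizes that are arbitrary positive
reals by erasing codewords at random.  In this way no sign condition on the rates is needed.

*Asymptotics.*  For `n`-fold product laws and codebooks with `2^(n R0)`, `2^(n R1)`, `2^(n R2)`
indices, the covering and decoding tests compare products, and `chernoff` shows that each test fails
with exponentially small probability as soon as the mean log-likelihood ratio is on the right side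
of the rate.  This is `sendable_of_rates`.

*Rates.*  With `q0 = p(w)`, `q1 = p(u | s, w)`, `q2 = p(v | t, w)` and the decoders testing against
`p(s, u | w, y1)`, `p(s, w, u | y1)` and their counterparts for the second receiver, the eight mean
log-likelihood ratios are combinations of joint entropies.  Eliminating `R0, R1, R2`
(`exists_rates`) from the eight rate constraints leaves exactly the four information inequalities of
the theorem, the one with the minimum counting twice.
-/

/-- Shannon entropy (in bits) of the push-forward of the pmf `p` under the map `f`. -/
noncomputable def margEnt {Ω α : Type*} [Fintype Ω] [Fintype α] [DecidableEq α]
    (p : Ω → ℝ) (f : Ω → α) : ℝ :=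
  ∑ a : α, -((∑ ω : Ω, if f ω = a then p ω else 0) *
      Real.logb 2 (∑ ω : Ω, if f ω = a then p ω else 0))

/-- Conditional entropy H(f | g). -/
noncomputable def condEnt {Ω α β : Type*} [Fintype Ω] [Fintype α] [Fintype β]
    [DecidableEq α] [DecidableEq β] (p : Ω → ℝ) (f : Ω → α) (g : Ω → β) : ℝ :=
  margEnt p (fun ω => (f ω, g ω)) - margEnt p g

/-- Mutual information I(f ; g). -/
noncomputable def mi {Ω α β : Type*} [Fintype Ω] [Fintype α] [Fintype β]
    [DecidableEq α] [DecidableEq β] (p : Ω → ℝ) (f : Ω → α) (g : Ω → β) : ℝ :=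
  margEnt p f + margEnt p g - margEnt p (fun ω => (f ω, g ω))

/-- Conditional mutual information I(f ; g | h). -/
noncomputable def cmi {Ω α β γ : Type*} [Fintype Ω] [Fintype α] [Fintype β] [Fintype γ]
    [DecidableEq α] [DecidableEq β] [DecidableEq γ]
    (p : Ω → ℝ) (f : Ω → α) (g : Ω → β) (h : Ω → γ) : ℝ :=
  margEnt p (fun ω => (f ω, h ω)) + margEnt p (fun ω => (g ω, h ω))
    - margEnt p (fun ω => (f ω, g ω, h ω)) - margEnt p h

/-- Shannon entropy (in bits) of a pmf. -/
noncomputable def pmfEnt {α : Type*} [Fintype α] (q : α → ℝ) : ℝ :=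
  ∑ a : α, -(q a * Real.logb 2 (q a))

/-- Probability of error at decoder 1 of a length-`n` source-channel code for the
broadcast channel `chan` with correlated source `pST`. -/
noncomputable def bcPe1 {S T X Y1 Y2 : Type*} [Fintype S] [Fintype T] [Fintype X]
    [Fintype Y1] [Fintype Y2] [DecidableEq S]
    (pST : S → T → ℝ) (chan : X → Y1 → Y2 → ℝ) (n : ℕ)
    (enc : (Fin n → S) × (Fin n → T) → Fin n → X)
    (φ1 : (Fin n → Y1) → Fin n → S) : ℝ :=
  ∑ sn : Fin n → S, ∑ tn : Fin n → T, ∑ y1n : Fin n → Y1, ∑ y2n : Fin n → Y2,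
    if φ1 y1n ≠ sn then
      (∏ i, pST (sn i) (tn i)) * ∏ i, chan (enc (sn, tn) i) (y1n i) (y2n i)
    else 0

/-- Probability of error at decoder 2. -/
noncomputable def bcPe2 {S T X Y1 Y2 : Type*} [Fintype S] [Fintype T] [Fintype X]
    [Fintype Y1] [Fintype Y2] [DecidableEq T]
    (pST : S → T → ℝ) (chan : X → Y1 → Y2 → ℝ) (n : ℕ)
    (enc : (Fin n → S) × (Fin n → T) → Fin n → X)
    (φ2 : (Fin n → Y2) → Fin n → T) : ℝ :=
  ∑ sn : Fin n → S, ∑ tn : Fin n → T, ∑ y1n : Fin n → Y1, ∑ y2n : Fin n → Y2,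
    if φ2 y2n ≠ tn then
      (∏ i, pST (sn i) (tn i)) * ∏ i, chan (enc (sn, tn) i) (y1n i) (y2n i)
    else 0

/-- The source `pST` can be sent with arbitrarily small probability of error over the
broadcast channel `chan`. -/
def BCSendable {S T X Y1 Y2 : Type*} [Fintype S] [Fintype T] [Fintype X]
    [Fintype Y1] [Fintype Y2] [DecidableEq S] [DecidableEq T]
    (pST : S → T → ℝ) (chan : X → Y1 → Y2 → ℝ) : Prop :=
  ∀ ε : ℝ, 0 < ε → ∃ N : ℕ, ∀ n : ℕ, N ≤ n →
    ∃ (enc : (Fin n → S) × (Fin n → T) → Fin n → X)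
      (φ1 : (Fin n → Y1) → Fin n → S) (φ2 : (Fin n → Y2) → Fin n → T),
      bcPe1 pST chan n enc φ1 ≤ ε ∧ bcPe2 pST chan n enc φ2 ≤ ε

/-- Sample space for the Han-Costa scheme. -/
abbrev Omega8 (S T W U V X Y1 Y2 : Type*) := S × T × W × U × V × X × Y1 × Y2

section Proj
variable {S T W U V X Y1 Y2 : Type*}
def bS  (ω : Omega8 S T W U V X Y1 Y2) : S := ω.1
def bT  (ω : Omega8 S T W U V X Y1 Y2) : T := ω.2.1
def bW  (ω : Omega8 S T W U V X Y1 Y2) : W := ω.2.2.1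
def bU  (ω : Omega8 S T W U V X Y1 Y2) : U := ω.2.2.2.1
def bV  (ω : Omega8 S T W U V X Y1 Y2) : V := ω.2.2.2.2.1
def bX  (ω : Omega8 S T W U V X Y1 Y2) : X := ω.2.2.2.2.2.1
def bY1 (ω : Omega8 S T W U V X Y1 Y2) : Y1 := ω.2.2.2.2.2.2.1
def bY2 (ω : Omega8 S T W U V X Y1 Y2) : Y2 := ω.2.2.2.2.2.2.2
end Proj

/-! ### Indicators and products of finite probability laws -/

/-- Indicator of a proposition, as a real number. -/
noncomputable def ind (P : Prop) : ℝ := open Classical in if P then 1 else 0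

lemma ind_nonneg (P : Prop) : 0 ≤ ind P := by unfold ind; split_ifs <;> norm_num
lemma ind_le_one (P : Prop) : ind P ≤ 1 := by unfold ind; split_ifs <;> norm_num
lemma ind_true {P : Prop} (h : P) : ind P = 1 := by simp [ind, h]
lemma ind_false {P : Prop} (h : ¬ P) : ind P = 0 := by simp [ind, h]

/-- Expectation of `F` under the product of the weights `Q i`. -/
noncomputable def pE {ι α : Type*} [Fintype ι] [DecidableEq ι] [Fintype α]
    (Q : ι → α → ℝ) (F : (ι → α) → ℝ) : ℝ :=
  ∑ c : ι → α, (∏ i, Q i (c i)) * F c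

section pE
variable {ι α : Type*} [Fintype ι] [DecidableEq ι] [Fintype α] {Q : ι → α → ℝ}

lemma sum_pi_prod (f : ι → α → ℝ) : ∑ c : ι → α, ∏ i, f i (c i) = ∏ i, ∑ a, f i a :=
  (Fintype.prod_sum f).symm

lemma pE_mono (h0 : ∀ i a, 0 ≤ Q i a) {F G : (ι → α) → ℝ} (h : ∀ c, F c ≤ G c) :
    pE Q F ≤ pE Q G :=
  Finset.sum_le_sum fun c _ =>
    mul_le_mul_of_nonneg_left (h c) (Finset.prod_nonneg fun i _ => h0 i _)

lemma pE_add (F G : (ι → α) → ℝ) : pE Q (fun c => F c + G c) = pE Q F + pE Q G := by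
  simp [pE, mul_add, Finset.sum_add_distrib]

lemma pE_mul_left (r : ℝ) (F : (ι → α) → ℝ) : pE Q (fun c => r * F c) = r * pE Q F := by
  simp only [pE, Finset.mul_sum]
  exact Finset.sum_congr rfl fun c _ => by ring

lemma pE_sum {κ : Type*} (s : Finset κ) (F : κ → (ι → α) → ℝ) :
    pE Q (fun c => ∑ k ∈ s, F k c) = ∑ k ∈ s, pE Q (F k) := by
  simp only [pE, Finset.mul_sum]
  exact Finset.sum_comm

lemma pE_const (h1 : ∀ i, ∑ a, Q i a = 1) (r : ℝ) : pE Q (fun _ => r) = r := by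
  simp [pE, ← Finset.sum_mul, sum_pi_prod, h1]

/-- Distinct coordinates are independent. -/
lemma pE_mul (h1 : ∀ i, ∑ a, Q i a = 1) {a b : ι} (hab : a ≠ b) (f g : α → ℝ) :
    pE Q (fun c => f (c a) * g (c b)) = (∑ x, Q a x * f x) * ∑ x, Q b x * g x := by
  have h : ∀ c : ι → α, (∏ i, Q i (c i)) * (f (c a) * g (c b)) =
      ∏ i, Q i (c i) * ((if i = a then f (c i) else 1) * (if i = b then g (c i) else 1)) := by
    intro c
    simp only [Finset.prod_mul_distrib]; simp
  simp only [pE, h]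
  rw [sum_pi_prod (fun i x => Q i x * ((if i = a then f x else 1) * (if i = b then g x else 1)))]
  rw [← Finset.mul_prod_erase _ _ (Finset.mem_univ a),
    ← Finset.mul_prod_erase _ _ (show b ∈ Finset.univ.erase a by simp [hab.symm])]
  rw [Finset.prod_eq_one, mul_one]
  · simp [hab, hab.symm]
  · intro i hi
    simp only [Finset.mem_erase, Finset.mem_univ, and_true] at hi
    simp [hi.1, hi.2, h1]

/-- The law of a single coordinate. -/
lemma pE_one (h1 : ∀ i, ∑ a, Q i a = 1) (a : ι) (f : α → ℝ) :
    pE Q (fun c => f (c a)) = ∑ x, Q a x * f x := by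
  have h : ∀ c : ι → α, (∏ i, Q i (c i)) * f (c a) =
      ∏ i, Q i (c i) * (if i = a then f (c i) else 1) := by
    intro c
    simp only [Finset.prod_mul_distrib]; simp
  simp only [pE, h]
  rw [sum_pi_prod (fun i x => Q i x * (if i = a then f x else 1)),
    ← Finset.mul_prod_erase _ _ (Finset.mem_univ a), Finset.prod_eq_one, mul_one]
  · simp
  · intro i hi
    simp only [Finset.mem_erase, Finset.mem_univ, and_true] at hi
    simp [hi, h1]

end pE

/-! ### The random superposition codebook and the packing bound -/

section codebook
variable {S T W U V I J K : Type*} [Fintype S] [Fintype T] [Fintype W] [Fintype U] [Fintype V]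
  [Fintype I] [Fintype J] [Fintype K] [DecidableEq S] [DecidableEq T]
  [DecidableEq I] [DecidableEq J] [DecidableEq K]

/-- Expectation over the random superposition codebook: independent cloud centres `c0 i` with law
`q0`; given these, independent satellites `c1 (s, i, j)` with law `q1 s (c0 i)` and `c2 (t, i, k)`
with law `q2 t (c0 i)`. -/
noncomputable def cE (q0 : W → ℝ) (q1 : S → W → U → ℝ) (q2 : T → W → V → ℝ)
    (F : (I → W) → (S × I × J → U) → (T × I × K → V) → ℝ) : ℝ :=
  pE (fun _ : I => q0) fun c0 =>
    pE (fun a : S × I × J => q1 a.1 (c0 a.2.1)) fun c1 =>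
      pE (fun b : T × I × K => q2 b.1 (c0 b.2.1)) fun c2 => F c0 c1 c2

variable {q0 : W → ℝ} {q1 : S → W → U → ℝ} {q2 : T → W → V → ℝ}

lemma cE_mono (h0 : ∀ w, 0 ≤ q0 w) (h1 : ∀ s w u, 0 ≤ q1 s w u) (h2 : ∀ t w v, 0 ≤ q2 t w v)
    {F G : (I → W) → (S × I × J → U) → (T × I × K → V) → ℝ}
    (h : ∀ c0 c1 c2, F c0 c1 c2 ≤ G c0 c1 c2) : cE q0 q1 q2 F ≤ cE q0 q1 q2 G :=
  pE_mono (fun _ => h0) fun c0 => pE_mono (fun _ => h1 _ _) fun c1 =>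
    pE_mono (fun _ => h2 _ _) fun c2 => h c0 c1 c2

lemma cE_add (F G : (I → W) → (S × I × J → U) → (T × I × K → V) → ℝ) :
    cE q0 q1 q2 (fun c0 c1 c2 => F c0 c1 c2 + G c0 c1 c2) = cE q0 q1 q2 F + cE q0 q1 q2 G := by
  simp only [cE, pE_add]

lemma cE_mul_left (r : ℝ) (F : (I → W) → (S × I × J → U) → (T × I × K → V) → ℝ) :
    cE q0 q1 q2 (fun c0 c1 c2 => r * F c0 c1 c2) = r * cE q0 q1 q2 F := by
  simp only [cE, pE_mul_left]

lemma cE_sum {κ : Type*} (s : Finset κ)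
    (F : κ → (I → W) → (S × I × J → U) → (T × I × K → V) → ℝ) :
    cE q0 q1 q2 (fun c0 c1 c2 => ∑ k ∈ s, F k c0 c1 c2) = ∑ k ∈ s, cE q0 q1 q2 (F k) := by
  simp only [cE, pE_sum]

lemma cE_const (h0 : ∑ w, q0 w = 1) (h1 : ∀ s w, ∑ u, q1 s w u = 1)
    (h2 : ∀ t w, ∑ v, q2 t w v = 1) (r : ℝ) :
    cE q0 q1 q2 (fun (_ : I → W) (_ : S × I × J → U) (_ : T × I × K → V) => r) = r := by
  rw [cE]
  refine Eq.trans (congrArg _ (funext fun c0 => ?_)) (pE_const (fun _ => h0) r)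
  refine Eq.trans (congrArg _ (funext fun c1 => ?_)) (pE_const (fun _ => h1 _ _) r)
  exact pE_const (fun _ => h2 _ _) r

/-- The two receivers play symmetric roles in the codebook. -/
lemma cE_swap (F : (I → W) → (S × I × J → U) → (T × I × K → V) → ℝ) :
    cE q0 q1 q2 F = cE q0 q2 q1 (fun c0 c2 c1 => F c0 c1 c2) := by
  simp only [cE]
  refine congrArg _ (funext fun c0 => ?_)
  simp only [pE, Finset.mul_sum]
  rw [Finset.sum_comm]
  refine Finset.sum_congr rfl fun _ _ => Finset.sum_congr rfl fun _ _ => ?_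
  ring

/-- The law of the codeword triple at one index. -/
lemma cE_first (h0 : ∑ w, q0 w = 1) (h1 : ∀ s w, ∑ u, q1 s w u = 1)
    (h2 : ∀ t w, ∑ v, q2 t w v = 1) (s : S) (t : T) (i : I) (j : J) (k : K)
    (F : W → U → V → ℝ) :
    cE q0 q1 q2 (fun (c0 : I → W) (c1 : S × I × J → U) (c2 : T × I × K → V) =>
      F (c0 i) (c1 (s, i, j)) (c2 (t, i, k))) =
    ∑ w, q0 w * ∑ u, q1 s w u * ∑ v, q2 t w v * F w u v := by
  simp only [cE]
  rw [← pE_one (fun _ => h0) i (fun w => ∑ u, q1 s w u * ∑ v, q2 t w v * F w u v)]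
  refine congrArg _ (funext fun c0 => ?_)
  rw [← pE_one (Q := fun a : S × I × J => q1 a.1 (c0 a.2.1)) (fun _ => h1 _ _) (s, i, j)
    (fun u => ∑ v, q2 t (c0 i) v * F (c0 i) u v)]
  refine congrArg _ (funext fun c1 => ?_)
  rw [← pE_one (Q := fun b : T × I × K => q2 b.1 (c0 b.2.1)) (fun _ => h2 _ _) (t, i, k)
    (fun v => F (c0 i) (c1 (s, i, j)) v)]

/-- Decoder 1 packing bound: given the codewords at index `(i, j, k)` for `(s, t)`, the expected
number of wrong candidates `(s', i', j')` with `B s' = 1` is at most `2 γ`.  The two halves come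
from candidates with the right and with a wrong cloud centre. -/
lemma packing (hq0 : ∀ w, 0 ≤ q0 w) (hq1 : ∀ s w u, 0 ≤ q1 s w u) (hq2 : ∀ t w v, 0 ≤ q2 t w v)
    (h0 : ∑ w, q0 w = 1) (h1 : ∀ s w, ∑ u, q1 s w u = 1)
    (h2 : ∀ t w, ∑ v, q2 t w v = 1) (s : S) (t : T) (i : I) (j : J) (k : K)
    (F : W → U → V → ℝ) (hF : ∀ w u v, 0 ≤ F w u v)
    (B : S → W → U → ℝ) (hB : ∀ s w u, 0 ≤ B s w u) (γ : ℝ)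
    (hB1 : ∀ w, (Fintype.card J : ℝ) * ∑ s, ∑ u, q1 s w u * B s w u ≤ γ)
    (hB2 : (Fintype.card I : ℝ) * Fintype.card J *
      ∑ s, ∑ w, q0 w * ∑ u, q1 s w u * B s w u ≤ γ) :
    cE q0 q1 q2 (fun (c0 : I → W) (c1 : S × I × J → U) (c2 : T × I × K → V) =>
      F (c0 i) (c1 (s, i, j)) (c2 (t, i, k)) *
        ∑ s', ∑ i', ∑ j', ind (s' ≠ s) * B s' (c0 i') (c1 (s', i', j'))) ≤
    2 * γ * ∑ w, q0 w * ∑ u, q1 s w u * ∑ v, q2 t w v * F w u v := by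
  set Fh : W → ℝ := fun w => ∑ u, q1 s w u * ∑ v, q2 t w v * F w u v with hFh
  set Bh : S → W → ℝ := fun s w => ∑ u, q1 s w u * B s w u with hBh
  have hFh0 : ∀ w, 0 ≤ Fh w := fun w => Finset.sum_nonneg fun u _ => mul_nonneg (hq1 _ _ _)
    (Finset.sum_nonneg fun v _ => mul_nonneg (hq2 _ _ _) (hF _ _ _))
  have hBh0 : ∀ s w, 0 ≤ Bh s w := fun s w => Finset.sum_nonneg fun u _ =>
    mul_nonneg (hq1 _ _ _) (hB _ _ _)
  -- the contribution of a single wrong candidate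
  have key : ∀ s' i' j', cE q0 q1 q2 (fun (c0 : I → W) (c1 : S × I × J → U)
      (c2 : T × I × K → V) => F (c0 i) (c1 (s, i, j)) (c2 (t, i, k)) *
        (ind (s' ≠ s) * B s' (c0 i') (c1 (s', i', j')))) ≤
      (if i' = i then ∑ w, q0 w * (Fh w * Bh s' w) else 0) +
        (∑ w, q0 w * Fh w) * ∑ w, q0 w * Bh s' w := by
    intro s' i' j'
    have hr1 : 0 ≤ ∑ w, q0 w * (Fh w * Bh s' w) := Finset.sum_nonneg fun w _ =>
      mul_nonneg (hq0 w) (mul_nonneg (hFh0 w) (hBh0 s' w))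
    have hr2 : 0 ≤ (∑ w, q0 w * Fh w) * ∑ w, q0 w * Bh s' w := mul_nonneg
      (Finset.sum_nonneg fun w _ => mul_nonneg (hq0 w) (hFh0 w))
      (Finset.sum_nonneg fun w _ => mul_nonneg (hq0 w) (hBh0 s' w))
    by_cases hs : s' = s
    · have : ind (s' ≠ s) = 0 := ind_false (by simpa using hs)
      simp only [this, zero_mul, mul_zero]
      rw [cE_const h0 h1 h2]
      split_ifs <;> linarith
    · have : ind (s' ≠ s) = 1 := ind_true hs
      simp only [this, one_mul]
      have hne : ((s, i, j) : S × I × J) ≠ (s', i', j') := fun h => hs (by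
        simp only [Prod.mk.injEq] at h; exact h.1.symm)
      have e : cE q0 q1 q2 (fun (c0 : I → W) (c1 : S × I × J → U)
          (c2 : T × I × K → V) => F (c0 i) (c1 (s, i, j)) (c2 (t, i, k)) *
            B s' (c0 i') (c1 (s', i', j'))) =
          pE (fun _ : I => q0) (fun c0 => Fh (c0 i) * Bh s' (c0 i')) := by
        simp only [cE]
        refine congrArg _ (funext fun c0 => ?_)
        rw [hFh, hBh]
        refine Eq.trans ?_ (pE_mul (Q := fun a : S × I × J => q1 a.1 (c0 a.2.1))
          (fun _ => h1 _ _) hne (fun u => ∑ v, q2 t (c0 i) v * F (c0 i) u v)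
          (fun u => B s' (c0 i') u))
        refine congrArg _ (funext fun c1 => ?_)
        rw [← pE_one (Q := fun b : T × I × K => q2 b.1 (c0 b.2.1)) (fun _ => h2 _ _) (t, i, k)
          (fun v => F (c0 i) (c1 (s, i, j)) v), mul_comm, ← pE_mul_left]
        refine congrArg _ (funext fun c2 => ?_)
        ring
      rw [e]
      by_cases hi : i' = i
      · subst hi
        rw [pE_one (fun _ => h0) i' (fun w => Fh w * Bh s' w)]
        simp only [if_true]
        linarith
      · rw [pE_mul (fun _ => h0) (Ne.symm hi) Fh (Bh s')]
        simp [hi]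
  simp only [Finset.mul_sum]
  simp only [cE_sum]
  calc _ ≤ ∑ s', ∑ i' : I, ∑ j' : J, ((if i' = i then ∑ w, q0 w * (Fh w * Bh s' w) else 0) +
        (∑ w, q0 w * Fh w) * ∑ w, q0 w * Bh s' w) :=
        Finset.sum_le_sum fun s' _ => Finset.sum_le_sum fun i' _ => Finset.sum_le_sum fun j' _ =>
          key s' i' j'
    _ = ∑ w, q0 w * Fh w * ((Fintype.card J : ℝ) * ∑ s', Bh s' w) +
        (∑ w, q0 w * Fh w) * ((Fintype.card I : ℝ) * Fintype.card J *
          ∑ s', ∑ w, q0 w * Bh s' w) := by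
        simp only [Finset.sum_add_distrib, Finset.sum_const, Finset.card_univ, nsmul_eq_mul,
          ← Finset.mul_sum, Finset.sum_ite_eq', Finset.mem_univ, if_true]
        congr 1
        · rw [Finset.sum_comm]
          rw [Finset.mul_sum]
          refine Finset.sum_congr rfl fun w _ => ?_
          simp only [← Finset.mul_sum]
          ring
        · ring
    _ ≤ ∑ w, q0 w * Fh w * γ + (∑ w, q0 w * Fh w) * γ := by
        refine add_le_add (Finset.sum_le_sum fun w _ => mul_le_mul_of_nonneg_left (hB1 w)
          (mul_nonneg (hq0 w) (hFh0 w))) (mul_le_mul_of_nonneg_left hB2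
          (Finset.sum_nonneg fun w _ => mul_nonneg (hq0 w) (hFh0 w)))
    _ = _ := by
        rw [← Finset.sum_mul]
        simp only [hFh, Finset.mul_sum, Finset.sum_mul, ← Finset.sum_add_distrib]
        refine Finset.sum_congr rfl fun w _ => Finset.sum_congr rfl fun u _ =>
          Finset.sum_congr rfl fun v _ => ?_
        ring

end codebook

/-! ### Concentration of the total weight -/

section secondMoment
variable {S T W U V I J K : Type*} [Fintype S] [Fintype T] [Fintype W] [Fintype U] [Fintype V]
  [Fintype I] [Fintype J] [Fintype K] [DecidableEq S] [DecidableEq T]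
  [DecidableEq I] [DecidableEq J] [DecidableEq K]
  {q0 : W → ℝ} {q1 : S → W → U → ℝ} {q2 : T → W → V → ℝ}

lemma mul_sq_le {q a c : ℝ} (ha : 0 ≤ a) (h : q * a ≤ c * q) :
    q * (a * a) ≤ c * (q * a) := by
  nlinarith [mul_le_mul_of_nonneg_right h ha]

/-- Correlation of the weights at two indices sharing the cloud centre and the first satellite. -/
lemma pair_same_first (hq2 : ∀ t w v, 0 ≤ q2 t w v) (h2 : ∀ t w, ∑ v, q2 t w v = 1)
    (h0 : ∑ w, q0 w = 1) (h1 : ∀ s w, ∑ u, q1 s w u = 1)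
    (s : S) (t : T) (L : W → U → V → ℝ) (hL : ∀ w u v, 0 ≤ L w u v) {c : ℝ} (hc : 0 ≤ c)
    (hθ : ∑ w, q0 w * ∑ u, q1 s w u * ∑ v, q2 t w v * L w u v ≤ 1)
    (hwu : ∀ w u, q0 w * (q1 s w u * ∑ v, q2 t w v * L w u v) ≤ c * (q0 w * q1 s w u))
    (i : I) (j : J) {k k' : K} (hk : k ≠ k') :
    cE q0 q1 q2 (fun (c0 : I → W) (c1 : S × I × J → U) (c2 : T × I × K → V) =>
      L (c0 i) (c1 (s, i, j)) (c2 (t, i, k)) * L (c0 i) (c1 (s, i, j)) (c2 (t, i, k'))) ≤ c := by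
  set b : W → U → ℝ := fun w u => ∑ v, q2 t w v * L w u v with hb
  have hb0 : ∀ w u, 0 ≤ b w u := fun w u => Finset.sum_nonneg fun v _ =>
    mul_nonneg (hq2 _ _ _) (hL _ _ _)
  have hne : ((t, i, k) : T × I × K) ≠ (t, i, k') := fun h => hk (by
    simp only [Prod.mk.injEq] at h; exact h.2.2)
  have e : cE q0 q1 q2 (fun (c0 : I → W) (c1 : S × I × J → U) (c2 : T × I × K → V) =>
      L (c0 i) (c1 (s, i, j)) (c2 (t, i, k)) * L (c0 i) (c1 (s, i, j)) (c2 (t, i, k'))) =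
      ∑ w, q0 w * ∑ u, q1 s w u * (b w u * b w u) := by
    simp only [cE]
    rw [← pE_one (fun _ => h0) i (fun w => ∑ u, q1 s w u * (b w u * b w u))]
    refine congrArg _ (funext fun c0 => ?_)
    rw [← pE_one (Q := fun a : S × I × J => q1 a.1 (c0 a.2.1)) (fun _ => h1 _ _) (s, i, j)
      (fun u => b (c0 i) u * b (c0 i) u)]
    refine congrArg _ (funext fun c1 => ?_)
    exact pE_mul (Q := fun b : T × I × K => q2 b.1 (c0 b.2.1)) (fun _ => h2 _ _) hne _ _
  rw [e]
  calc _ ≤ ∑ w, c * (q0 w * ∑ u, q1 s w u * b w u) := by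
        refine Finset.sum_le_sum fun w _ => ?_
        simp only [Finset.mul_sum]
        refine Finset.sum_le_sum fun u _ => ?_
        have := mul_sq_le (q := q0 w * q1 s w u) (hb0 w u)
          (by simpa [mul_assoc] using hwu w u)
        simpa [mul_assoc] using this
    _ = c * ∑ w, q0 w * ∑ u, q1 s w u * b w u := by rw [Finset.mul_sum]
    _ ≤ c := by nlinarith

/-- Second moment of the total weight `∑ L` of the codeword triples assigned to `(s, t)`, where
`θ` is the mean weight of one triple.  The four bounds control the pairs of indices that share the
cloud centre: with both satellites different, the first or the second one shared, or both. -/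
lemma total_weight (hq1 : ∀ s w u, 0 ≤ q1 s w u)
    (hq2 : ∀ t w v, 0 ≤ q2 t w v) (h0 : ∑ w, q0 w = 1) (h1 : ∀ s w, ∑ u, q1 s w u = 1)
    (h2 : ∀ t w, ∑ v, q2 t w v = 1)
    (s : S) (t : T) (L : W → U → V → ℝ) (hL : ∀ w u v, 0 ≤ L w u v) {γ θ : ℝ} (hγ : 0 ≤ γ)
    (hθ : ∑ w, q0 w * ∑ u, q1 s w u * ∑ v, q2 t w v * L w u v = θ) (hθ1 : θ ≤ 1)
    (hw : ∀ w, q0 w * ∑ u, q1 s w u * ∑ v, q2 t w v * L w u v ≤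
      γ * Fintype.card I * q0 w)
    (hwu : ∀ w u, q0 w * (q1 s w u * ∑ v, q2 t w v * L w u v) ≤
      γ * Fintype.card I * Fintype.card J * (q0 w * q1 s w u))
    (hwv : ∀ w v, q0 w * (q2 t w v * ∑ u, q1 s w u * L w u v) ≤
      γ * Fintype.card I * Fintype.card K * (q0 w * q2 t w v))
    (hwuv : ∀ w u v, q0 w * (q1 s w u * (q2 t w v * L w u v)) ≤
      γ * Fintype.card I * Fintype.card J * Fintype.card K * (q0 w * (q1 s w u * q2 t w v))) :
    cE q0 q1 q2 (fun (c0 : I → W) (c1 : S × I × J → U) (c2 : T × I × K → V) =>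
      (∑ i, ∑ j, ∑ k, L (c0 i) (c1 (s, i, j)) (c2 (t, i, k))) ^ 2) ≤
    ((Fintype.card I : ℝ) * Fintype.card J * Fintype.card K) ^ 2 * (θ ^ 2 + 4 * γ) := by
  have hpair : ∀ (i i' : I) (j j' : J) (k k' : K),
      cE q0 q1 q2 (fun (c0 : I → W) (c1 : S × I × J → U) (c2 : T × I × K → V) =>
        L (c0 i) (c1 (s, i, j)) (c2 (t, i, k)) * L (c0 i') (c1 (s, i', j')) (c2 (t, i', k'))) ≤
      θ ^ 2 + if i = i' then (γ * Fintype.card I +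
        (if j = j' then γ * Fintype.card I * Fintype.card J else 0) +
        (if k = k' then γ * Fintype.card I * Fintype.card K else 0) +
        (if j = j' then (if k = k' then
          γ * Fintype.card I * Fintype.card J * Fintype.card K else 0) else 0)) else 0 := by
    intro i i' j j' k k'
    set b : W → U → ℝ := fun w u => ∑ v, q2 t w v * L w u v with hb
    set a : W → ℝ := fun w => ∑ u, q1 s w u * b w u with ha
    have hb0 : ∀ w u, 0 ≤ b w u := fun w u => Finset.sum_nonneg fun v _ =>
      mul_nonneg (hq2 _ _ _) (hL _ _ _)
    have ha0 : ∀ w, 0 ≤ a w := fun w => Finset.sum_nonneg fun u _ =>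
      mul_nonneg (hq1 _ _ _) (hb0 _ _)
    have hθ2 := sq_nonneg θ
    have hI : 0 ≤ γ * Fintype.card I := by positivity
    have hIJ : 0 ≤ γ * Fintype.card I * Fintype.card J := by positivity
    have hIK : 0 ≤ γ * Fintype.card I * Fintype.card K := by positivity
    have hIJK : 0 ≤ γ * Fintype.card I * Fintype.card J * Fintype.card K := by positivity
    by_cases hi : i = i'
    · subst hi
      by_cases hj : j = j'
      · subst hj
        by_cases hk : k = k'
        · subst hk
          have h : cE q0 q1 q2 (fun (c0 : I → W) (c1 : S × I × J → U) (c2 : T × I × K → V) =>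
              L (c0 i) (c1 (s, i, j)) (c2 (t, i, k)) * L (c0 i) (c1 (s, i, j)) (c2 (t, i, k))) ≤
              γ * Fintype.card I * Fintype.card J * Fintype.card K := by
            rw [cE_first h0 h1 h2 s t i j k (fun w u v => L w u v * L w u v)]
            calc _ ≤ ∑ w, ∑ u, ∑ v, (γ * Fintype.card I * Fintype.card J * Fintype.card K) *
                  (q0 w * (q1 s w u * (q2 t w v * L w u v))) := by
                  simp only [Finset.mul_sum]
                  refine Finset.sum_le_sum fun w _ => Finset.sum_le_sum fun u _ =>
                    Finset.sum_le_sum fun v _ => ?_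
                  have := mul_sq_le (q := q0 w * (q1 s w u * q2 t w v))
                    (hL w u v)
                    (c := γ * Fintype.card I * Fintype.card J * Fintype.card K)
                    (by simpa [mul_assoc] using hwuv w u v)
                  simpa [mul_assoc] using this
              _ = (γ * Fintype.card I * Fintype.card J * Fintype.card K) *
                  ∑ w, q0 w * ∑ u, q1 s w u * ∑ v, q2 t w v * L w u v := by
                  simp only [Finset.mul_sum]
              _ ≤ _ := by rw [hθ]; nlinarith
          simp only [if_true]
          linarith
        · have h := pair_same_first (I := I) (J := J) hq2 h2 h0 h1 s t L hL hIJ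
            (hθ.le.trans hθ1) hwu i j hk
          simp only [if_true, if_neg hk]
          linarith
      · by_cases hk : k = k'
        · subst hk
          have h := pair_same_first (I := I) (J := K) hq1 h1 h0 h2 t s
            (fun w v u => L w u v) (fun _ _ _ => hL _ _ _) hIK (by
              refine le_trans (le_of_eq ?_) (hθ.le.trans hθ1)
              refine Finset.sum_congr rfl fun w _ => ?_
              simp only [Finset.mul_sum]
              rw [Finset.sum_comm]
              refine Finset.sum_congr rfl fun u _ => Finset.sum_congr rfl fun v _ => ?_
              ring) hwv i k hj
          rw [cE_swap]
          simp only [if_true, if_neg hj]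
          linarith
        · have hne1 : ((s, i, j) : S × I × J) ≠ (s, i, j') := fun h => hj (by
            simp only [Prod.mk.injEq] at h; exact h.2.2)
          have hne2 : ((t, i, k) : T × I × K) ≠ (t, i, k') := fun h => hk (by
            simp only [Prod.mk.injEq] at h; exact h.2.2)
          have e : cE q0 q1 q2 (fun (c0 : I → W) (c1 : S × I × J → U) (c2 : T × I × K → V) =>
              L (c0 i) (c1 (s, i, j)) (c2 (t, i, k)) *
                L (c0 i) (c1 (s, i, j')) (c2 (t, i, k'))) = ∑ w, q0 w * (a w * a w) := by
            simp only [cE]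
            rw [← pE_one (fun _ => h0) i (fun w => a w * a w)]
            refine congrArg _ (funext fun c0 => ?_)
            refine Eq.trans ?_ (pE_mul (Q := fun a : S × I × J => q1 a.1 (c0 a.2.1))
              (fun _ => h1 _ _) hne1 (b (c0 i)) (b (c0 i)))
            refine congrArg _ (funext fun c1 => ?_)
            exact pE_mul (Q := fun b : T × I × K => q2 b.1 (c0 b.2.1)) (fun _ => h2 _ _) hne2 _ _
          have h : ∑ w, q0 w * (a w * a w) ≤ γ * Fintype.card I := by
            calc _ ≤ ∑ w, (γ * Fintype.card I) * (q0 w * a w) :=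
                  Finset.sum_le_sum fun w _ => mul_sq_le (ha0 w) (hw w)
              _ = (γ * Fintype.card I) * ∑ w, q0 w * a w := by rw [Finset.mul_sum]
              _ ≤ _ := by rw [hθ]; nlinarith
          rw [e]
          simp only [if_true, if_neg hk, if_neg hj]
          linarith
    · have hne1 : ((s, i, j) : S × I × J) ≠ (s, i', j') := fun h => hi (by
        simp only [Prod.mk.injEq] at h; exact h.2.1)
      have hne2 : ((t, i, k) : T × I × K) ≠ (t, i', k') := fun h => hi (by
        simp only [Prod.mk.injEq] at h; exact h.2.1)
      have e : cE q0 q1 q2 (fun (c0 : I → W) (c1 : S × I × J → U) (c2 : T × I × K → V) =>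
          L (c0 i) (c1 (s, i, j)) (c2 (t, i, k)) *
            L (c0 i') (c1 (s, i', j')) (c2 (t, i', k'))) = θ * θ := by
        simp only [cE]
        conv_rhs => rw [← hθ]
        refine Eq.trans ?_ (pE_mul (fun _ : I => h0) hi a a)
        refine congrArg _ (funext fun c0 => ?_)
        refine Eq.trans ?_ (pE_mul (Q := fun a : S × I × J => q1 a.1 (c0 a.2.1))
          (fun _ => h1 _ _) hne1 (b (c0 i)) (b (c0 i')))
        refine congrArg _ (funext fun c1 => ?_)
        exact pE_mul (Q := fun b : T × I × K => q2 b.1 (c0 b.2.1)) (fun _ => h2 _ _) hne2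
          (L (c0 i) (c1 (s, i, j))) (L (c0 i') (c1 (s, i', j')))
      rw [e, if_neg hi]
      nlinarith
  have hpair' := fun (i i' : I) (j j' : J) (k k' : K) => (hpair i i' j j' k k').trans_eq
    (show _ = θ ^ 2 + (if i = i' then (1 : ℝ) else 0) * (γ * Fintype.card I +
        (if j = j' then (1 : ℝ) else 0) * (γ * Fintype.card I * Fintype.card J) +
        (if k = k' then (1 : ℝ) else 0) * (γ * Fintype.card I * Fintype.card K) +
        (if j = j' then (1 : ℝ) else 0) * ((if k = k' then (1 : ℝ) else 0) *
          (γ * Fintype.card I * Fintype.card J * Fintype.card K))) by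
      split_ifs <;> ring)
  have hsq : ∀ (c0 : I → W) (c1 : S × I × J → U) (c2 : T × I × K → V),
      (∑ i, ∑ j, ∑ k, L (c0 i) (c1 (s, i, j)) (c2 (t, i, k))) ^ 2 =
      ∑ i, ∑ i', ∑ j, ∑ j', ∑ k, ∑ k', L (c0 i) (c1 (s, i, j)) (c2 (t, i, k)) *
        L (c0 i') (c1 (s, i', j')) (c2 (t, i', k')) := by
    intro c0 c1 c2
    rw [sq, Finset.sum_mul_sum]
    refine Finset.sum_congr rfl fun i _ => Finset.sum_congr rfl fun i' _ => ?_
    rw [Finset.sum_mul_sum]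
    refine Finset.sum_congr rfl fun j _ => Finset.sum_congr rfl fun j' _ => ?_
    rw [Finset.sum_mul_sum]
  simp only [hsq, cE_sum]
  calc _ ≤ _ := Finset.sum_le_sum fun i _ => Finset.sum_le_sum fun i' _ =>
        Finset.sum_le_sum fun j _ => Finset.sum_le_sum fun j' _ =>
        Finset.sum_le_sum fun k _ => Finset.sum_le_sum fun k' _ => hpair' i i' j j' k k'
    _ = _ := by
      simp only [Finset.sum_add_distrib, Finset.sum_const, Finset.card_univ, nsmul_eq_mul,
        ← Finset.mul_sum, ← Finset.sum_mul, Finset.sum_ite_eq, Finset.mem_univ, if_true]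
      ring

end secondMoment

/-! ### The error for a fixed source pair -/

section oneShot
variable {S T W U V X Y1 Y2 I J K : Type*} [Fintype S] [Fintype T] [Fintype W] [Fintype U]
  [Fintype V] [Fintype X] [Fintype Y1] [Fintype Y2]
  [Fintype I] [Fintype J] [Fintype K] [DecidableEq S] [DecidableEq T]
  [DecidableEq I] [DecidableEq J] [DecidableEq K]
  {q0 : W → ℝ} {q1 : S → W → U → ℝ} {q2 : T → W → V → ℝ}

lemma sum_ind_mul_le {α : Type*} [Fintype α] (P : α → Prop) (k : α → ℝ) (hk : ∀ a, 0 ≤ k a)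
    {c : ℝ} (hc : 0 ≤ c) (h : ∀ a, P a → ∑ a, k a ≤ c) : ∑ a, ind (P a) * k a ≤ c := by
  by_cases hP : ∃ a, P a
  · obtain ⟨a, ha⟩ := hP
    refine le_trans (Finset.sum_le_sum fun b _ => ?_) (h a ha)
    exact mul_le_of_le_one_left (hk b) (ind_le_one _)
  · push Not at hP
    simpa [ind_false (hP _)] using hc

/-- A decoder that outputs some message having a codeword accepted by the test `A`; it errs only
if the true codeword is rejected or a codeword of another message is accepted. -/
lemma exists_decoder {Y : Type*} [Nonempty S] (A : S → W → U → Y → Prop) :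
    ∃ φ : (I → W) → (S × I × J → U) → Y → S, ∀ c0 c1 y s i j,
      ind (φ c0 c1 y ≠ s) ≤ ind (¬ A s (c0 i) (c1 (s, i, j)) y) +
        ∑ s', ∑ i', ∑ j', ind (s' ≠ s) * ind (A s' (c0 i') (c1 (s', i', j')) y) := by
  classical
  refine ⟨fun c0 c1 y => if h : ∃ s i j, A s (c0 i) (c1 (s, i, j)) y then h.choose
    else Classical.arbitrary S, fun c0 c1 y s i j => ?_⟩
  have hnn : ∀ s' i' j', 0 ≤ ind (s' ≠ s) * ind (A s' (c0 i') (c1 (s', i', j')) y) :=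
    fun _ _ _ => mul_nonneg (ind_nonneg _) (ind_nonneg _)
  have hsum : 0 ≤ ∑ s', ∑ i', ∑ j', ind (s' ≠ s) * ind (A s' (c0 i') (c1 (s', i', j')) y) :=
    Finset.sum_nonneg fun _ _ => Finset.sum_nonneg fun _ _ => Finset.sum_nonneg fun _ _ =>
      hnn _ _ _
  beta_reduce
  by_cases hA : A s (c0 i) (c1 (s, i, j)) y
  · have hex : ∃ s i j, A s (c0 i) (c1 (s, i, j)) y := ⟨s, i, j, hA⟩
    rw [dif_pos hex]
    by_cases hs : hex.choose = s
    · rw [ind_false (by simpa using hs)]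
      have := ind_nonneg (¬ A s (c0 i) (c1 (s, i, j)) y)
      linarith
    · obtain ⟨i', j', h'⟩ := hex.choose_spec
      have h1 : (1 : ℝ) ≤ ∑ s', ∑ i', ∑ j',
          ind (s' ≠ s) * ind (A s' (c0 i') (c1 (s', i', j')) y) := by
        refine le_trans ?_ (Finset.single_le_sum (fun s' _ => Finset.sum_nonneg fun _ _ =>
          Finset.sum_nonneg fun _ _ => hnn s' _ _) (Finset.mem_univ hex.choose))
        refine le_trans ?_ (Finset.single_le_sum (fun i' _ => Finset.sum_nonneg fun _ _ =>
          hnn _ i' _) (Finset.mem_univ i'))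
        refine le_trans ?_ (Finset.single_le_sum (fun j' _ => hnn _ _ j') (Finset.mem_univ j'))
        rw [ind_true hs, ind_true h', one_mul]
      have := ind_nonneg (¬ A s (c0 i) (c1 (s, i, j)) y)
      have := ind_le_one (hex.choose ≠ s)
      linarith
  · rw [ind_true hA]
    have := ind_le_one ((if h : ∃ s i j, A s (c0 i) (c1 (s, i, j)) y then h.choose
      else Classical.arbitrary S) ≠ s)
    linarith

/-- The expected error, averaged over the codebook, for a fixed source pair `(s, t)`.  The encoder
picks the best channel input, so its error `m` is dominated by any weighted average of the errors
of channel inputs drawn from codeword triples; the weights are the likelihood ratios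
`κ / (q0 q1 q2)`. -/
lemma error_fixed_source [Nonempty I] [Nonempty J] [Nonempty K]
    (hq0 : ∀ w, 0 ≤ q0 w) (hq1 : ∀ s w u, 0 ≤ q1 s w u)
    (hq2 : ∀ t w v, 0 ≤ q2 t w v) (h0 : ∑ w, q0 w = 1) (h1 : ∀ s w, ∑ u, q1 s w u = 1)
    (h2 : ∀ t w, ∑ v, q2 t w v = 1) (s : S) (t : T)
    (κ : W → U → V → ℝ) (hκ : ∀ w u v, 0 ≤ κ w u v) (hκ1 : ∑ w, ∑ u, ∑ v, κ w u v = 1)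
    (pX : W → U → V → X → ℝ) (hpX : ∀ w u v x, 0 ≤ pX w u v x) (hpX1 : ∀ w u v, ∑ x, pX w u v x = 1)
    (ch : X → Y1 → Y2 → ℝ) (hch : ∀ x y1 y2, 0 ≤ ch x y1 y2)
    (hch1 : ∀ x, ∑ y1, ∑ y2, ch x y1 y2 = 1)
    (E : W → U → V → Prop) (A1 : S → W → U → Y1 → Prop) (A2 : T → W → V → Y2 → Prop)
    {γ : ℝ} (hγ : 0 ≤ γ)
    (hw : ∀ w u v, E w u v → ∑ u, ∑ v, κ w u v ≤ γ * Fintype.card I * q0 w)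
    (hwu : ∀ w u v, E w u v → ∑ v, κ w u v ≤
      γ * Fintype.card I * Fintype.card J * (q0 w * q1 s w u))
    (hwv : ∀ w u v, E w u v → ∑ u, κ w u v ≤
      γ * Fintype.card I * Fintype.card K * (q0 w * q2 t w v))
    (hwuv : ∀ w u v, E w u v → κ w u v ≤
      γ * Fintype.card I * Fintype.card J * Fintype.card K * (q0 w * (q1 s w u * q2 t w v)))
    (hA1 : ∀ w y, (Fintype.card J : ℝ) * ∑ s, ∑ u, q1 s w u * ind (A1 s w u y) ≤ γ)
    (hA1' : ∀ y, (Fintype.card I : ℝ) * Fintype.card J *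
      ∑ s, ∑ w, q0 w * ∑ u, q1 s w u * ind (A1 s w u y) ≤ γ)
    (hA2 : ∀ w y, (Fintype.card K : ℝ) * ∑ t, ∑ v, q2 t w v * ind (A2 t w v y) ≤ γ)
    (hA2' : ∀ y, (Fintype.card I : ℝ) * Fintype.card K *
      ∑ t, ∑ w, q0 w * ∑ v, q2 t w v * ind (A2 t w v y) ≤ γ)
    (φ1 : (I → W) → (S × I × J → U) → Y1 → S) (φ2 : (I → W) → (T × I × K → V) → Y2 → T)
    (hφ1 : ∀ c0 c1 y s i j,
      ind (φ1 c0 c1 y ≠ s) ≤ ind (¬ A1 s (c0 i) (c1 (s, i, j)) y) +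
        ∑ s', ∑ i', ∑ j', ind (s' ≠ s) * ind (A1 s' (c0 i') (c1 (s', i', j')) y))
    (hφ2 : ∀ c0 c2 y t i k,
      ind (φ2 c0 c2 y ≠ t) ≤ ind (¬ A2 t (c0 i) (c2 (t, i, k)) y) +
        ∑ t', ∑ i', ∑ k', ind (t' ≠ t) * ind (A2 t' (c0 i') (c2 (t', i', k')) y))
    (m : (I → W) → (S × I × J → U) → (T × I × K → V) → ℝ)
    (hm0 : ∀ c0 c1 c2, 0 ≤ m c0 c1 c2) (hm2 : ∀ c0 c1 c2, m c0 c1 c2 ≤ 2)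
    (hm : ∀ c0 c1 c2 x, m c0 c1 c2 ≤ ∑ y1, ∑ y2, ch x y1 y2 *
      (ind (φ1 c0 c1 y1 ≠ s) + ind (φ2 c0 c2 y2 ≠ t))) :
    cE q0 q1 q2 m ≤ 12 * (∑ w, ∑ u, ∑ v, ∑ x, ∑ y1, ∑ y2, κ w u v * (pX w u v x * (ch x y1 y2 *
      ind (¬ (E w u v ∧ A1 s w u y1 ∧ A2 t w v y2))))) + 136 * γ := by
  set bad := ∑ w, ∑ u, ∑ v, ∑ x, ∑ y1, ∑ y2, κ w u v * (pX w u v x * (ch x y1 y2 *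
      ind (¬ (E w u v ∧ A1 s w u y1 ∧ A2 t w v y2)))) with hbad
  set L : W → U → V → ℝ := fun w u v =>
    ind (E w u v) * κ w u v / (q0 w * (q1 s w u * q2 t w v)) with hLdef
  have hq : ∀ w u v, 0 ≤ q0 w * (q1 s w u * q2 t w v) := fun w u v =>
    mul_nonneg (hq0 _) (mul_nonneg (hq1 _ _ _) (hq2 _ _ _))
  have hL : ∀ w u v, 0 ≤ L w u v := fun w u v =>
    div_nonneg (mul_nonneg (ind_nonneg _) (hκ _ _ _)) (hq w u v)
  have hLk : ∀ w u v, q0 w * (q1 s w u * (q2 t w v * L w u v)) = ind (E w u v) * κ w u v := by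
    intro w u v
    by_cases hE : E w u v
    · by_cases hz : q0 w * (q1 s w u * q2 t w v) = 0
      · have := hwuv w u v hE
        rw [hz, mul_zero] at this
        have hk0 : κ w u v = 0 := le_antisymm this (hκ w u v)
        simp [hLdef, hk0]
      · simp only [hLdef]
        rw [show q0 w * (q1 s w u * (q2 t w v * (ind (E w u v) * κ w u v /
          (q0 w * (q1 s w u * q2 t w v))))) = (q0 w * (q1 s w u * q2 t w v)) *
          (ind (E w u v) * κ w u v / (q0 w * (q1 s w u * q2 t w v))) by ring]
        exact mul_div_cancel₀ _ hz
    · simp [hLdef, ind_false hE]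
  -- planted expectation: weighting by `L` turns the codebook law into the target law
  have hplant : ∀ f : W → U → V → ℝ, ∑ w, q0 w * ∑ u, q1 s w u * ∑ v, q2 t w v *
      (L w u v * f w u v) = ∑ w, ∑ u, ∑ v, ind (E w u v) * κ w u v * f w u v := by
    intro f
    simp only [Finset.mul_sum]
    refine Finset.sum_congr rfl fun w _ => Finset.sum_congr rfl fun u _ =>
      Finset.sum_congr rfl fun v _ => ?_
    rw [← hLk]; ring
  have hplant' : ∀ f : W → U → V → ℝ, ∑ w, q0 w * ∑ v, q2 t w v * ∑ u, q1 s w u *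
      (L w u v * f w u v) = ∑ w, ∑ u, ∑ v, ind (E w u v) * κ w u v * f w u v := by
    intro f
    rw [← hplant]
    refine Finset.sum_congr rfl fun w _ => ?_
    simp only [Finset.mul_sum]
    rw [Finset.sum_comm]
    refine Finset.sum_congr rfl fun u _ => Finset.sum_congr rfl fun v _ => ?_
    ring
  set θ := ∑ w, ∑ u, ∑ v, ind (E w u v) * κ w u v with hθ
  have hLθ : ∑ w, q0 w * ∑ u, q1 s w u * ∑ v, q2 t w v * L w u v = θ := by
    simpa using hplant (fun _ _ _ => 1)
  have hθ1 : θ ≤ 1 := by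
    rw [← hκ1]
    exact Finset.sum_le_sum fun w _ => Finset.sum_le_sum fun u _ => Finset.sum_le_sum fun v _ =>
      mul_le_of_le_one_left (hκ _ _ _) (ind_le_one _)
  have hsumch : ∀ w u v, ∑ x, ∑ y1, ∑ y2, pX w u v x * ch x y1 y2 = 1 := by
    intro w u v
    simp only [← Finset.mul_sum, hch1, mul_one, hpX1]
  have hterm : ∀ w u v x y1 y2, 0 ≤ κ w u v * (pX w u v x * ch x y1 y2) := fun w u v x y1 y2 =>
    mul_nonneg (hκ _ _ _) (mul_nonneg (hpX _ _ _ _) (hch _ _ _))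
  have hθbad : 1 - θ ≤ bad := by
    have e : 1 - θ = ∑ w, ∑ u, ∑ v, ∑ x, ∑ y1, ∑ y2, κ w u v * (pX w u v x * ch x y1 y2) *
        (1 - ind (E w u v)) := by
      simp only [← Finset.sum_mul, ← Finset.mul_sum, hch1, mul_one, hpX1]
      simp only [mul_sub, mul_one, Finset.sum_sub_distrib, hκ1, hθ]
      simp only [mul_comm]
    rw [e, hbad]
    refine Finset.sum_le_sum fun w _ => Finset.sum_le_sum fun u _ => Finset.sum_le_sum fun v _ =>
      Finset.sum_le_sum fun x _ => Finset.sum_le_sum fun y1 _ => Finset.sum_le_sum fun y2 _ => ?_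
    have : 1 - ind (E w u v) ≤ ind (¬ (E w u v ∧ A1 s w u y1 ∧ A2 t w v y2)) := by
      by_cases hE : E w u v
      · rw [ind_true hE, sub_self]; exact ind_nonneg _
      · rw [ind_false hE, ind_true (fun h => hE h.1)]; norm_num
    have := mul_le_mul_of_nonneg_left this (hterm w u v x y1 y2)
    linarith
  -- the mean and the concentration of the total weight
  set M : ℝ := (Fintype.card I : ℝ) * Fintype.card J * Fintype.card K with hM
  have hMpos : 0 < M := by
    have h1 : 0 < Fintype.card I := Fintype.card_pos
    have h2 : 0 < Fintype.card J := Fintype.card_pos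
    have h3 : 0 < Fintype.card K := Fintype.card_pos
    positivity
  set Z : (I → W) → (S × I × J → U) → (T × I × K → V) → ℝ := fun c0 c1 c2 =>
    ∑ i, ∑ j, ∑ k, L (c0 i) (c1 (s, i, j)) (c2 (t, i, k)) with hZ
  have hZ1 : cE q0 q1 q2 Z = M * θ := by
    simp only [hZ, cE_sum]
    simp only [cE_first h0 h1 h2 s t _ _ _ L, hLθ, Finset.sum_const, Finset.card_univ,
      nsmul_eq_mul, hM]
    ring
  have hZ2 : cE q0 q1 q2 (fun c0 c1 c2 => Z c0 c1 c2 ^ 2) ≤ M ^ 2 * (θ ^ 2 + 4 * γ) := by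
    refine total_weight hq1 hq2 h0 h1 h2 s t L hL hγ hLθ hθ1 ?_ ?_ ?_ ?_
    · intro w
      have e : q0 w * ∑ u, q1 s w u * ∑ v, q2 t w v * L w u v =
          ∑ a : U × V, ind (E w a.1 a.2) * κ w a.1 a.2 := by
        simp only [Finset.mul_sum, hLk, Fintype.sum_prod_type]
      rw [e]
      refine sum_ind_mul_le _ _ (fun a => hκ _ _ _)
        (mul_nonneg (by positivity) (hq0 _)) fun a ha => ?_
      rw [Fintype.sum_prod_type]
      exact hw w _ _ ha
    · intro w u
      simp only [Finset.mul_sum, hLk]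
      exact sum_ind_mul_le _ _ (fun a => hκ _ _ _)
        (mul_nonneg (by positivity) (mul_nonneg (hq0 _) (hq1 _ _ _))) fun v hv => hwu w u v hv
    · intro w v
      have e : q0 w * (q2 t w v * ∑ u, q1 s w u * L w u v) = ∑ u, ind (E w u v) * κ w u v := by
        simp only [Finset.mul_sum, ← hLk]
        exact Finset.sum_congr rfl fun u _ => by ring
      rw [e]
      exact sum_ind_mul_le _ _ (fun a => hκ _ _ _)
        (mul_nonneg (by positivity) (mul_nonneg (hq0 _) (hq2 _ _ _))) fun u hu => hwv w u v hu
    · intro w u v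
      rw [hLk]
      by_cases hE : E w u v
      · rw [ind_true hE, one_mul]; exact hwuv w u v hE
      · rw [ind_false hE, zero_mul]
        exact mul_nonneg (by positivity) (hq w u v)
  -- the weighted sum of the errors over all codeword triples
  set N : (I → W) → (S × I × J → U) → (T × I × K → V) → ℝ := fun c0 c1 c2 =>
    ∑ i, ∑ j, ∑ k, L (c0 i) (c1 (s, i, j)) (c2 (t, i, k)) * ∑ x,
      pX (c0 i) (c1 (s, i, j)) (c2 (t, i, k)) x * ∑ y1, ∑ y2, ch x y1 y2 *
      (ind (φ1 c0 c1 y1 ≠ s) + ind (φ2 c0 c2 y2 ≠ t)) with hN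
  have hZN : ∀ c0 c1 c2, Z c0 c1 c2 * m c0 c1 c2 ≤ N c0 c1 c2 := by
    intro c0 c1 c2
    simp only [hZ, hN, Finset.sum_mul]
    refine Finset.sum_le_sum fun i _ => Finset.sum_le_sum fun j _ => Finset.sum_le_sum fun k _ => ?_
    refine mul_le_mul_of_nonneg_left ?_ (hL _ _ _)
    calc m c0 c1 c2 = ∑ x, pX (c0 i) (c1 (s, i, j)) (c2 (t, i, k)) x * m c0 c1 c2 := by
          rw [← Finset.sum_mul, hpX1, one_mul]
      _ ≤ _ := Finset.sum_le_sum fun x _ =>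
          mul_le_mul_of_nonneg_left (hm c0 c1 c2 x) (hpX _ _ _ _)
  have hpt : ∀ c0 c1 c2, m c0 c1 c2 ≤ (8 * (1 - θ) + 32 * θ ^ 2) + (32 / M ^ 2 * Z c0 c1 c2 ^ 2 +
      (- (64 * θ / M) * Z c0 c1 c2 + 2 / M * N c0 c1 c2)) := by
    intro c0 c1 c2
    have hZn := hZN c0 c1 c2
    have hz0 : 0 ≤ Z c0 c1 c2 := Finset.sum_nonneg fun i _ => Finset.sum_nonneg fun j _ =>
      Finset.sum_nonneg fun k _ => hL _ _ _
    have hN0 : 0 ≤ N c0 c1 c2 := le_trans (mul_nonneg hz0 (hm0 c0 c1 c2)) hZn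
    have ha := hm0 c0 c1 c2
    have hb := hm2 c0 c1 c2
    generalize m c0 c1 c2 = a at *
    generalize N c0 c1 c2 = n at *
    generalize Z c0 c1 c2 = z at *
    have e : (8 * (1 - θ) + 32 * θ ^ 2) + (32 / M ^ 2 * z ^ 2 +
      (- (64 * θ / M) * z + 2 / M * n)) =
      8 * (1 - θ) + 32 * (z / M - θ) ^ 2 + 2 * (n / M) := by
      field_simp; ring
    rw [e]
    have hy0 : 0 ≤ n / M := by positivity
    have hzn : z / M * a ≤ n / M := by rw [div_mul_eq_mul_div]; gcongr
    generalize z / M = ζ at *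
    generalize n / M = ν at *
    by_cases c1 : θ < 3 / 4
    · nlinarith [sq_nonneg (ζ - θ)]
    · by_cases c2 : ζ < 1 / 2
      · nlinarith [sq_nonneg (ζ - θ)]
      · nlinarith [sq_nonneg (ζ - θ)]
  have hNE : cE q0 q1 q2 N ≤ M * (2 * bad + 4 * γ) := by
    have hone : ∀ i j k, cE q0 q1 q2 (fun (c0 : I → W) (c1 : S × I × J → U) (c2 : T × I × K → V) =>
        L (c0 i) (c1 (s, i, j)) (c2 (t, i, k)) * ∑ x,
        pX (c0 i) (c1 (s, i, j)) (c2 (t, i, k)) x * ∑ y1, ∑ y2, ch x y1 y2 *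
        (ind (φ1 c0 c1 y1 ≠ s) + ind (φ2 c0 c2 y2 ≠ t))) ≤ 2 * bad + 4 * γ := by
      intro i j k
      -- `G x y1 y2` is the weight of a triple together with the channel input and outputs
      set G : X → Y1 → Y2 → W → U → V → ℝ := fun x y1 y2 w u v =>
        L w u v * (pX w u v x * ch x y1 y2) with hG
      have hG0 : ∀ x y1 y2 w u v, 0 ≤ G x y1 y2 w u v := fun x y1 y2 w u v =>
        mul_nonneg (hL _ _ _) (mul_nonneg (hpX _ _ _ _) (hch _ _ _))
      have hle : ∀ (c0 : I → W) (c1 : S × I × J → U) (c2 : T × I × K → V),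
          L (c0 i) (c1 (s, i, j)) (c2 (t, i, k)) * ∑ x,
            pX (c0 i) (c1 (s, i, j)) (c2 (t, i, k)) x * ∑ y1, ∑ y2, ch x y1 y2 *
            (ind (φ1 c0 c1 y1 ≠ s) + ind (φ2 c0 c2 y2 ≠ t)) ≤
          ∑ x, ∑ y1, ∑ y2, (G x y1 y2 (c0 i) (c1 (s, i, j)) (c2 (t, i, k)) *
            (ind (¬ A1 s (c0 i) (c1 (s, i, j)) y1) + ind (¬ A2 t (c0 i) (c2 (t, i, k)) y2)) +
            (G x y1 y2 (c0 i) (c1 (s, i, j)) (c2 (t, i, k)) *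
              ∑ s', ∑ i', ∑ j', ind (s' ≠ s) * ind (A1 s' (c0 i') (c1 (s', i', j')) y1) +
            G x y1 y2 (c0 i) (c1 (s, i, j)) (c2 (t, i, k)) *
              ∑ t', ∑ i', ∑ k', ind (t' ≠ t) * ind (A2 t' (c0 i') (c2 (t', i', k')) y2))) := by
        intro c0 c1 c2
        rw [Finset.mul_sum]
        refine Finset.sum_le_sum fun x _ => ?_
        rw [Finset.mul_sum, Finset.mul_sum]
        refine Finset.sum_le_sum fun y1 _ => ?_
        rw [Finset.mul_sum, Finset.mul_sum]
        refine Finset.sum_le_sum fun y2 _ => ?_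
        have a1 := hφ1 c0 c1 y1 s i j
        have a2 := hφ2 c0 c2 y2 t i k
        have := mul_le_mul_of_nonneg_left (add_le_add a1 a2)
          (hG0 x y1 y2 (c0 i) (c1 (s, i, j)) (c2 (t, i, k)))
        refine le_trans (le_of_eq ?_) (this.trans (le_of_eq ?_))
        · simp only [hG]; ring
        · ring
      refine (cE_mono hq0 hq1 hq2 hle).trans ?_
      simp only [cE_sum, cE_add]
      have b1 : ∀ x y1 y2, cE q0 q1 q2 (fun (c0 : I → W) (c1 : S × I × J → U)
          (c2 : T × I × K → V) => G x y1 y2 (c0 i) (c1 (s, i, j)) (c2 (t, i, k)) *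
            (ind (¬ A1 s (c0 i) (c1 (s, i, j)) y1) + ind (¬ A2 t (c0 i) (c2 (t, i, k)) y2))) =
          ∑ w, ∑ u, ∑ v, ind (E w u v) * κ w u v * (pX w u v x * ch x y1 y2 *
            (ind (¬ A1 s w u y1) + ind (¬ A2 t w v y2))) := by
        intro x y1 y2
        rw [cE_first h0 h1 h2 s t i j k (fun w u v => G x y1 y2 w u v *
          (ind (¬ A1 s w u y1) + ind (¬ A2 t w v y2))), ← hplant]
        simp only [hG, mul_assoc]
      have b2 : ∀ x y1 y2, cE q0 q1 q2 (fun (c0 : I → W) (c1 : S × I × J → U)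
          (c2 : T × I × K → V) => G x y1 y2 (c0 i) (c1 (s, i, j)) (c2 (t, i, k)) *
            ∑ s', ∑ i', ∑ j', ind (s' ≠ s) * ind (A1 s' (c0 i') (c1 (s', i', j')) y1)) ≤
          2 * γ * ∑ w, ∑ u, ∑ v, ind (E w u v) * κ w u v * (pX w u v x * ch x y1 y2) := by
        intro x y1 y2
        rw [← hplant]
        exact packing hq0 hq1 hq2 h0 h1 h2 s t i j k (G x y1 y2) (hG0 x y1 y2)
          (fun s w u => ind (A1 s w u y1)) (fun _ _ _ => ind_nonneg _) γ
          (fun w => hA1 w y1) (hA1' y1)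
      have b3 : ∀ x y1 y2, cE q0 q1 q2 (fun (c0 : I → W) (c1 : S × I × J → U)
          (c2 : T × I × K → V) => G x y1 y2 (c0 i) (c1 (s, i, j)) (c2 (t, i, k)) *
            ∑ t', ∑ i', ∑ k', ind (t' ≠ t) * ind (A2 t' (c0 i') (c2 (t', i', k')) y2)) ≤
          2 * γ * ∑ w, ∑ u, ∑ v, ind (E w u v) * κ w u v * (pX w u v x * ch x y1 y2) := by
        intro x y1 y2
        rw [← hplant', cE_swap]
        exact packing hq0 hq2 hq1 h0 h2 h1 t s i k j (fun w v u => G x y1 y2 w u v)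
          (fun _ _ _ => hG0 x y1 y2 _ _ _)
          (fun t w v => ind (A2 t w v y2)) (fun _ _ _ => ind_nonneg _) γ
          (fun w => hA2 w y2) (hA2' y2)
      have comm : ∀ f : X → Y1 → Y2 → W → U → V → ℝ,
          ∑ x, ∑ y1, ∑ y2, ∑ w, ∑ u, ∑ v, f x y1 y2 w u v =
          ∑ w, ∑ u, ∑ v, ∑ x, ∑ y1, ∑ y2, f x y1 y2 w u v := by
        intro f
        have := Finset.sum_comm (s := (Finset.univ : Finset (X × Y1 × Y2)))
          (t := (Finset.univ : Finset (W × U × V)))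
          (f := fun a b => f a.1 a.2.1 a.2.2 b.1 b.2.1 b.2.2)
        simpa only [Fintype.sum_prod_type] using this
      have c1 : ∑ x, ∑ y1, ∑ y2, ∑ w, ∑ u, ∑ v, ind (E w u v) * κ w u v *
          (pX w u v x * ch x y1 y2) = θ := by
        rw [comm, hθ]
        refine Finset.sum_congr rfl fun w _ => Finset.sum_congr rfl fun u _ =>
          Finset.sum_congr rfl fun v _ => ?_
        simp only [← Finset.mul_sum, hch1, mul_one, hpX1]
      have c2 : ∑ x, ∑ y1, ∑ y2, ∑ w, ∑ u, ∑ v, ind (E w u v) * κ w u v *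
          (pX w u v x * ch x y1 y2 * (ind (¬ A1 s w u y1) + ind (¬ A2 t w v y2))) ≤ 2 * bad := by
        rw [comm, hbad]
        simp only [Finset.mul_sum]
        refine Finset.sum_le_sum fun w _ => Finset.sum_le_sum fun u _ => Finset.sum_le_sum fun v _ =>
          Finset.sum_le_sum fun x _ => Finset.sum_le_sum fun y1 _ => Finset.sum_le_sum fun y2 _ => ?_
        have : ind (E w u v) * (ind (¬ A1 s w u y1) + ind (¬ A2 t w v y2)) ≤
            2 * ind (¬ (E w u v ∧ A1 s w u y1 ∧ A2 t w v y2)) := by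
          by_cases e1 : E w u v <;> by_cases e2 : A1 s w u y1 <;> by_cases e3 : A2 t w v y2 <;>
            simp [ind, e1, e2, e3] <;> norm_num
        have := mul_le_mul_of_nonneg_left this (hterm w u v x y1 y2)
        refine le_trans (le_of_eq ?_) (this.trans (le_of_eq ?_)) <;> ring
      simp only [Finset.sum_add_distrib, b1]
      have d2 := Finset.sum_le_sum fun x (_ : x ∈ Finset.univ) => Finset.sum_le_sum
        fun y1 (_ : y1 ∈ Finset.univ) => Finset.sum_le_sum
        fun y2 (_ : y2 ∈ Finset.univ) => b2 x y1 y2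
      have d3 := Finset.sum_le_sum fun x (_ : x ∈ Finset.univ) => Finset.sum_le_sum
        fun y1 (_ : y1 ∈ Finset.univ) => Finset.sum_le_sum
        fun y2 (_ : y2 ∈ Finset.univ) => b3 x y1 y2
      have c3 : ∑ x, ∑ y1, ∑ y2, 2 * γ * ∑ w, ∑ u, ∑ v, ind (E w u v) * κ w u v *
          (pX w u v x * ch x y1 y2) = 2 * γ * θ := by
        rw [← c1, Finset.mul_sum]
        refine Finset.sum_congr rfl fun x _ => ?_
        rw [Finset.mul_sum]
        refine Finset.sum_congr rfl fun y1 _ => ?_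
        rw [Finset.mul_sum]
      rw [c3] at d2 d3
      have : 2 * γ * θ ≤ 2 * γ := by nlinarith
      linarith
    simp only [hN, cE_sum]
    refine (Finset.sum_le_sum fun i _ => Finset.sum_le_sum fun j _ => Finset.sum_le_sum fun k _ =>
      hone i j k).trans (le_of_eq ?_)
    simp only [Finset.sum_const, Finset.card_univ, nsmul_eq_mul, hM]
    ring
  refine (cE_mono hq0 hq1 hq2 hpt).trans ?_
  simp only [cE_add, cE_mul_left, cE_const h0 h1 h2, hZ1]
  have f1 : 32 / M ^ 2 * cE q0 q1 q2 (fun c0 c1 c2 => Z c0 c1 c2 ^ 2) ≤ 32 * (θ ^ 2 + 4 * γ) := by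
    calc _ ≤ 32 / M ^ 2 * (M ^ 2 * (θ ^ 2 + 4 * γ)) := by gcongr
      _ = _ := by field_simp
  have f2 : 2 / M * cE q0 q1 q2 N ≤ 2 * (2 * bad + 4 * γ) := by
    calc _ ≤ 2 / M * (M * (2 * bad + 4 * γ)) := by gcongr
      _ = _ := by field_simp
  have f3 : -(64 * θ / M) * (M * θ) = - 64 * θ ^ 2 := by field_simp
  rw [f3]
  linarith

end oneShot

/-! ### One-shot achievability -/

section averaging
variable {S T W U V X Y1 Y2 I J K : Type*} [Fintype S] [Fintype T] [Fintype W] [Fintype U]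
  [Fintype V] [Fintype X] [Fintype Y1] [Fintype Y2]
  [Fintype I] [Fintype J] [Fintype K]

/-- One-shot achievability for codebook laws that are genuine probability distributions. -/
lemma one_shot [Nonempty S] [Nonempty T] [Nonempty W] [Nonempty U] [Nonempty V] [Nonempty X]
    [Nonempty I] [Nonempty J] [Nonempty K]
    {q0 : W → ℝ} {q1 : S → W → U → ℝ} {q2 : T → W → V → ℝ}
    (hq0 : ∀ w, 0 ≤ q0 w) (hq1 : ∀ s w u, 0 ≤ q1 s w u)
    (hq2 : ∀ t w v, 0 ≤ q2 t w v) (h0 : ∑ w, q0 w = 1) (h1 : ∀ s w, ∑ u, q1 s w u = 1)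
    (h2 : ∀ t w, ∑ v, q2 t w v = 1)
    (pST : S → T → ℝ) (hp : ∀ s t, 0 ≤ pST s t) (hp1 : ∑ s, ∑ t, pST s t = 1)
    (κ : S → T → W → U → V → ℝ) (hκ : ∀ s t w u v, 0 ≤ κ s t w u v)
    (hκ1 : ∀ s t, ∑ w, ∑ u, ∑ v, κ s t w u v = 1)
    (pX : W → U → V → X → ℝ) (hpX : ∀ w u v x, 0 ≤ pX w u v x) (hpX1 : ∀ w u v, ∑ x, pX w u v x = 1)
    (ch : X → Y1 → Y2 → ℝ) (hch : ∀ x y1 y2, 0 ≤ ch x y1 y2)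
    (hch1 : ∀ x, ∑ y1, ∑ y2, ch x y1 y2 = 1)
    (E : S → T → W → U → V → Prop) (A1 : S → W → U → Y1 → Prop) (A2 : T → W → V → Y2 → Prop)
    {γ η : ℝ} (hγ : 0 ≤ γ)
    (hw : ∀ s t w u v, E s t w u v → ∑ u, ∑ v, κ s t w u v ≤ γ * Fintype.card I * q0 w)
    (hwu : ∀ s t w u v, E s t w u v → ∑ v, κ s t w u v ≤
      γ * Fintype.card I * Fintype.card J * (q0 w * q1 s w u))
    (hwv : ∀ s t w u v, E s t w u v → ∑ u, κ s t w u v ≤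
      γ * Fintype.card I * Fintype.card K * (q0 w * q2 t w v))
    (hwuv : ∀ s t w u v, E s t w u v → κ s t w u v ≤
      γ * Fintype.card I * Fintype.card J * Fintype.card K * (q0 w * (q1 s w u * q2 t w v)))
    (hA1 : ∀ w y, (Fintype.card J : ℝ) * ∑ s, ∑ u, q1 s w u * ind (A1 s w u y) ≤ γ)
    (hA1' : ∀ y, (Fintype.card I : ℝ) * Fintype.card J *
      ∑ s, ∑ w, q0 w * ∑ u, q1 s w u * ind (A1 s w u y) ≤ γ)
    (hA2 : ∀ w y, (Fintype.card K : ℝ) * ∑ t, ∑ v, q2 t w v * ind (A2 t w v y) ≤ γ)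
    (hA2' : ∀ y, (Fintype.card I : ℝ) * Fintype.card K *
      ∑ t, ∑ w, q0 w * ∑ v, q2 t w v * ind (A2 t w v y) ≤ γ)
    (hη : ∑ s, ∑ t, pST s t * ∑ w, ∑ u, ∑ v, ∑ x, ∑ y1, ∑ y2, κ s t w u v * (pX w u v x *
      (ch x y1 y2 * ind (¬ (E s t w u v ∧ A1 s w u y1 ∧ A2 t w v y2)))) ≤ η) :
    ∃ (enc : S → T → X) (φ1 : Y1 → S) (φ2 : Y2 → T),
      ∑ s, ∑ t, pST s t * ∑ y1, ∑ y2, ch (enc s t) y1 y2 * (ind (φ1 y1 ≠ s) + ind (φ2 y2 ≠ t)) ≤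
        12 * η + 136 * γ := by
  classical
  obtain ⟨φ1, hφ1⟩ := exists_decoder (I := I) (J := J) A1
  obtain ⟨φ2, hφ2⟩ := exists_decoder (I := I) (J := K) A2
  -- the encoder picks the channel input with the least conditional error probability
  let err : (I → W) → (S × I × J → U) → (T × I × K → V) → S → T → X → ℝ := fun c0 c1 c2 s t x =>
    ∑ y1, ∑ y2, ch x y1 y2 * (ind (φ1 c0 c1 y1 ≠ s) + ind (φ2 c0 c2 y2 ≠ t))
  choose enc henc using fun c0 c1 c2 s t => Finite.exists_min (err c0 c1 c2 s t)
  have herr0 : ∀ c0 c1 c2 s t x, 0 ≤ err c0 c1 c2 s t x := fun c0 c1 c2 s t x =>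
    Finset.sum_nonneg fun _ _ => Finset.sum_nonneg fun _ _ =>
      mul_nonneg (hch _ _ _) (add_nonneg (ind_nonneg _) (ind_nonneg _))
  have herr2 : ∀ c0 c1 c2 s t x, err c0 c1 c2 s t x ≤ 2 := by
    intro c0 c1 c2 s t x
    calc err c0 c1 c2 s t x ≤ ∑ y1, ∑ y2, ch x y1 y2 * 2 :=
          Finset.sum_le_sum fun y1 _ => Finset.sum_le_sum fun y2 _ =>
            mul_le_mul_of_nonneg_left (by
              have := ind_le_one (φ1 c0 c1 y1 ≠ s); have := ind_le_one (φ2 c0 c2 y2 ≠ t)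
              linarith) (hch _ _ _)
      _ = 2 := by simp only [← Finset.sum_mul, hch1, one_mul]
  let m : S → T → (I → W) → (S × I × J → U) → (T × I × K → V) → ℝ := fun s t c0 c1 c2 =>
    err c0 c1 c2 s t (enc c0 c1 c2 s t)
  have hfix := fun s t => error_fixed_source hq0 hq1 hq2 h0 h1 h2 s t (κ s t) (hκ s t) (hκ1 s t)
    pX hpX hpX1 ch hch hch1 (E s t) A1 A2 hγ (hw s t) (hwu s t) (hwv s t) (hwuv s t) hA1 hA1' hA2
    hA2' φ1 φ2 hφ1 hφ2 (m s t) (fun _ _ _ => herr0 _ _ _ _ _ _) (fun _ _ _ => herr2 _ _ _ _ _ _)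
    (fun c0 c1 c2 x => henc c0 c1 c2 s t x)
  have havg : cE q0 q1 q2 (fun c0 c1 c2 => ∑ s, ∑ t, pST s t * m s t c0 c1 c2) ≤
      12 * η + 136 * γ := by
    simp only [cE_sum, cE_mul_left]
    calc _ ≤ ∑ s, ∑ t, pST s t * (12 * (∑ w, ∑ u, ∑ v, ∑ x, ∑ y1, ∑ y2, κ s t w u v * (pX w u v x *
          (ch x y1 y2 * ind (¬ (E s t w u v ∧ A1 s w u y1 ∧ A2 t w v y2))))) + 136 * γ) :=
          Finset.sum_le_sum fun s _ => Finset.sum_le_sum fun t _ =>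
            mul_le_mul_of_nonneg_left (hfix s t) (hp s t)
      _ = 12 * (∑ s, ∑ t, pST s t * ∑ w, ∑ u, ∑ v, ∑ x, ∑ y1, ∑ y2, κ s t w u v * (pX w u v x *
          (ch x y1 y2 * ind (¬ (E s t w u v ∧ A1 s w u y1 ∧ A2 t w v y2))))) +
          (∑ s, ∑ t, pST s t) * (136 * γ) := by
          rw [Finset.mul_sum, Finset.sum_mul, ← Finset.sum_add_distrib]
          refine Finset.sum_congr rfl fun s _ => ?_
          rw [Finset.mul_sum, Finset.sum_mul, ← Finset.sum_add_distrib]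
          exact Finset.sum_congr rfl fun t _ => by ring
      _ ≤ _ := by rw [hp1]; linarith
  -- some codebook is at least as good as the average one
  obtain ⟨c, hc⟩ := Finite.exists_min
    (fun c : (I → W) × (S × I × J → U) × (T × I × K → V) =>
      ∑ s, ∑ t, pST s t * m s t c.1 c.2.1 c.2.2)
  refine ⟨enc c.1 c.2.1 c.2.2, φ1 c.1 c.2.1, φ2 c.1 c.2.2, le_trans ?_ havg⟩
  have h := cE_mono hq0 hq1 hq2 (fun c0 c1 c2 => hc (c0, c1, c2))
  rwa [cE_const h0 h1 h2] at h

end averaging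

section subprob

/-- The sub-probability `a • q` on `α`, completed to a probability on `Option α`. -/
noncomputable def opt {α : Type*} [Fintype α] (a : ℝ) (q : α → ℝ) : Option α → ℝ
  | some x => a * q x
  | none => 1 - ∑ x, a * q x

lemma opt_sum {α : Type*} [Fintype α] (a : ℝ) (q : α → ℝ) : ∑ x, opt a q x = 1 := by
  rw [Fintype.sum_option]; simp [opt]

lemma opt_nonneg {α : Type*} [Fintype α] {a : ℝ} {q : α → ℝ} (ha : 0 ≤ a) (ha1 : a ≤ 1)
    (hq : ∀ x, 0 ≤ q x) (hq1 : ∑ x, q x ≤ 1) (x : Option α) : 0 ≤ opt a q x := by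
  cases x with
  | some x => exact mul_nonneg ha (hq x)
  | none =>
    simp only [opt, ← Finset.mul_sum, sub_nonneg]
    exact mul_le_one₀ ha1 (Finset.sum_nonneg fun x _ => hq x) hq1

/-- A finite index type `I` and a thinning factor `a ≤ 1` with `|I| a` any prescribed positive
number. -/
lemma exists_card_mul {M : ℝ} (hM : 0 < M) :
    ∃ (N : ℕ) (a : ℝ), 0 < N ∧ 0 ≤ a ∧ a ≤ 1 ∧ (N : ℝ) * a = M := by
  have h : (0 : ℝ) < ⌈M⌉₊ := by exact_mod_cast Nat.ceil_pos.mpr hM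
  exact ⟨⌈M⌉₊, M / ⌈M⌉₊, Nat.ceil_pos.mpr hM, by positivity,
    (div_le_one h).2 (Nat.le_ceil M), mul_div_cancel₀ _ h.ne'⟩

/-- One-shot achievability with arbitrary positive codebook sizes `M0, M1, M2` and
sub-probability codebook laws: sizes that are not integers (or are below `1`) are realised by
erasing codewords at random, an erased codeword being `none`. -/
lemma one_shot_sub {S T W U V X Y1 Y2 : Type*} [Fintype S] [Fintype T] [Fintype W] [Fintype U]
    [Fintype V] [Fintype X] [Fintype Y1] [Fintype Y2]
    [Nonempty S] [Nonempty T] [Nonempty W] [Nonempty U] [Nonempty V] [Nonempty X]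
    {q0 : W → ℝ} {q1 : S → W → U → ℝ} {q2 : T → W → V → ℝ}
    (hq0 : ∀ w, 0 ≤ q0 w) (hq1 : ∀ s w u, 0 ≤ q1 s w u)
    (hq2 : ∀ t w v, 0 ≤ q2 t w v) (h0 : ∑ w, q0 w ≤ 1) (h1 : ∀ s w, ∑ u, q1 s w u ≤ 1)
    (h2 : ∀ t w, ∑ v, q2 t w v ≤ 1)
    (pST : S → T → ℝ) (hp : ∀ s t, 0 ≤ pST s t) (hp1 : ∑ s, ∑ t, pST s t = 1)
    (κ : S → T → W → U → V → ℝ) (hκ : ∀ s t w u v, 0 ≤ κ s t w u v)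
    (hκ1 : ∀ s t, ∑ w, ∑ u, ∑ v, κ s t w u v = 1)
    (pX : W → U → V → X → ℝ) (hpX : ∀ w u v x, 0 ≤ pX w u v x) (hpX1 : ∀ w u v, ∑ x, pX w u v x = 1)
    (ch : X → Y1 → Y2 → ℝ) (hch : ∀ x y1 y2, 0 ≤ ch x y1 y2)
    (hch1 : ∀ x, ∑ y1, ∑ y2, ch x y1 y2 = 1)
    (E : S → T → W → U → V → Prop) (A1 : S → W → U → Y1 → Prop) (A2 : T → W → V → Y2 → Prop)
    {γ η M0 M1 M2 : ℝ} (hγ : 0 ≤ γ) (hM0 : 0 < M0) (hM1 : 0 < M1) (hM2 : 0 < M2)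
    (hw : ∀ s t w u v, E s t w u v → ∑ u, ∑ v, κ s t w u v ≤ γ * M0 * q0 w)
    (hwu : ∀ s t w u v, E s t w u v → ∑ v, κ s t w u v ≤ γ * M0 * M1 * (q0 w * q1 s w u))
    (hwv : ∀ s t w u v, E s t w u v → ∑ u, κ s t w u v ≤ γ * M0 * M2 * (q0 w * q2 t w v))
    (hwuv : ∀ s t w u v, E s t w u v → κ s t w u v ≤
      γ * M0 * M1 * M2 * (q0 w * (q1 s w u * q2 t w v)))
    (hA1 : ∀ w y, M1 * ∑ s, ∑ u, q1 s w u * ind (A1 s w u y) ≤ γ)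
    (hA1' : ∀ y, M0 * M1 * ∑ s, ∑ w, q0 w * ∑ u, q1 s w u * ind (A1 s w u y) ≤ γ)
    (hA2 : ∀ w y, M2 * ∑ t, ∑ v, q2 t w v * ind (A2 t w v y) ≤ γ)
    (hA2' : ∀ y, M0 * M2 * ∑ t, ∑ w, q0 w * ∑ v, q2 t w v * ind (A2 t w v y) ≤ γ)
    (hη : ∑ s, ∑ t, pST s t * ∑ w, ∑ u, ∑ v, ∑ x, ∑ y1, ∑ y2, κ s t w u v * (pX w u v x *
      (ch x y1 y2 * ind (¬ (E s t w u v ∧ A1 s w u y1 ∧ A2 t w v y2)))) ≤ η) :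
    ∃ (enc : S → T → X) (φ1 : Y1 → S) (φ2 : Y2 → T),
      ∑ s, ∑ t, pST s t * ∑ y1, ∑ y2, ch (enc s t) y1 y2 * (ind (φ1 y1 ≠ s) + ind (φ2 y2 ≠ t)) ≤
        12 * η + 136 * γ := by
  obtain ⟨N0, a0, hN0, ha0, ha0', hNa0⟩ := exists_card_mul hM0
  obtain ⟨N1, a1, hN1, ha1, ha1', hNa1⟩ := exists_card_mul hM1
  obtain ⟨N2, a2, hN2, ha2, ha2', hNa2⟩ := exists_card_mul hM2
  have : Nonempty (Fin N0) := ⟨⟨0, hN0⟩⟩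
  have : Nonempty (Fin N1) := ⟨⟨0, hN1⟩⟩
  have : Nonempty (Fin N2) := ⟨⟨0, hN2⟩⟩
  have ind_F : ind False = 0 := ind_false id
  refine one_shot (I := Fin N0) (J := Fin N1) (K := Fin N2)
    (q0 := opt a0 q0)
    (q1 := fun s w => w.elim (opt 0 fun _ : U => 0) fun w => opt a1 (q1 s w))
    (q2 := fun t w => w.elim (opt 0 fun _ : V => 0) fun w => opt a2 (q2 t w))
    (opt_nonneg ha0 ha0' hq0 h0) ?_ ?_ (opt_sum _ _) ?_ ?_ pST hp hp1
    (fun s t w u v => w.elim 0 fun w => u.elim 0 fun u => v.elim 0 fun v => κ s t w u v) ?_ ?_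
    (fun w u v => pX (w.getD (Classical.arbitrary W)) (u.getD (Classical.arbitrary U))
      (v.getD (Classical.arbitrary V))) (fun _ _ _ => hpX _ _ _) (fun _ _ _ => hpX1 _ _ _)
    ch hch hch1
    (fun s t w u v => w.elim False fun w => u.elim False fun u => v.elim False fun v => E s t w u v)
    (fun s w u y => w.elim False fun w => u.elim False fun u => A1 s w u y)
    (fun t w v y => w.elim False fun w => v.elim False fun v => A2 t w v y)
    (γ := γ) hγ ?_ ?_ ?_ ?_ ?_ ?_ ?_ ?_ ?_
  · rintro s (_ | w) u
    · exact opt_nonneg le_rfl zero_le_one (fun _ => le_rfl) (by simp) u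
    · exact opt_nonneg ha1 ha1' (hq1 s w) (h1 s w) u
  · rintro s (_ | w) v
    · exact opt_nonneg le_rfl zero_le_one (fun _ => le_rfl) (by simp) v
    · exact opt_nonneg ha2 ha2' (hq2 s w) (h2 s w) v
  · rintro s (_ | w) <;> exact opt_sum _ _
  · rintro s (_ | w) <;> exact opt_sum _ _
  · rintro s t (_ | w) (_ | u) (_ | v) <;> simp [hκ]
  · intro s t
    simp [Fintype.sum_option, hκ1]
  · rintro s t (_ | w) (_ | u) (_ | v) h <;> try exact h.elim
    have := hw s t w u v h
    simp only [Fintype.sum_option, Option.elim_none, Option.elim_some, Finset.sum_const_zero,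
      zero_add, Fintype.card_fin, opt]
    rw [← hNa0] at this
    linarith
  · rintro s t (_ | w) (_ | u) (_ | v) h <;> try exact h.elim
    have := hwu s t w u v h
    simp only [Fintype.sum_option, Option.elim_none, Option.elim_some,
      zero_add, Fintype.card_fin, opt]
    rw [← hNa0, ← hNa1] at this
    linarith
  · rintro s t (_ | w) (_ | u) (_ | v) h <;> try exact h.elim
    have := hwv s t w u v h
    simp only [Fintype.sum_option, Option.elim_none, Option.elim_some,
      zero_add, Fintype.card_fin, opt]
    rw [← hNa0, ← hNa2] at this
    linarith
  · rintro s t (_ | w) (_ | u) (_ | v) h <;> try exact h.elim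
    have := hwuv s t w u v h
    simp only [Option.elim_some, Fintype.card_fin, opt]
    rw [← hNa0, ← hNa1, ← hNa2] at this
    linarith
  · rintro (_ | w) y
    · simpa [ind_F] using hγ
    · have := hA1 w y
      simp only [Fintype.sum_option, Option.elim_none, Option.elim_some, ind_F, mul_zero,
        zero_add, Fintype.card_fin, opt]
      rw [← hNa1] at this
      simpa only [mul_assoc, ← Finset.mul_sum] using this
  · intro y
    have := hA1' y
    simp only [Fintype.sum_option, Option.elim_none, Option.elim_some, ind_F, mul_zero,
      zero_add, Fintype.card_fin, opt, Finset.sum_const_zero]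
    rw [← hNa0, ← hNa1] at this
    refine (le_of_eq ?_).trans this
    simp only [Finset.mul_sum]
    exact Finset.sum_congr rfl fun s _ => Finset.sum_congr rfl fun w _ =>
      Finset.sum_congr rfl fun u _ => by ring
  · rintro (_ | w) y
    · simpa [ind_F] using hγ
    · have := hA2 w y
      simp only [Fintype.sum_option, Option.elim_none, Option.elim_some, ind_F, mul_zero,
        zero_add, Fintype.card_fin, opt]
      rw [← hNa2] at this
      simpa only [mul_assoc, ← Finset.mul_sum] using this
  · intro y
    have := hA2' y
    simp only [Fintype.sum_option, Option.elim_none, Option.elim_some, ind_F, mul_zero,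
      zero_add, Fintype.card_fin, opt, Finset.sum_const_zero]
    rw [← hNa0, ← hNa2] at this
    refine (le_of_eq ?_).trans this
    simp only [Finset.mul_sum]
    exact Finset.sum_congr rfl fun s _ => Finset.sum_congr rfl fun w _ =>
      Finset.sum_congr rfl fun u _ => by ring
  · simpa [Fintype.sum_option] using hη

end subprob

/-! ### Chernoff bounds and product laws -/

section nLetter
open Filter Topology

/-- Chernoff bound for a likelihood ratio: the product of the ratios `a / b` along an i.i.d.
sequence exceeds `2 ^ (n r)` with exponentially small probability as soon as the mean of
`log (a / b)` is below `r`. -/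
lemma chernoff {Ω : Type*} [Fintype Ω] (p : Ω → ℝ) (hp : ∀ ω, 0 ≤ p ω) (hp1 : ∑ ω, p ω = 1)
    (a b : Ω → ℝ) (ha : ∀ ω, 0 < p ω → 0 < a ω) (hb : ∀ ω, 0 < p ω → 0 < b ω) (r : ℝ)
    (h : ∑ ω, p ω * (Real.logb 2 (a ω) - Real.logb 2 (b ω)) < r) :
    ∃ ρ : ℝ, 0 ≤ ρ ∧ ρ < 1 ∧ ∀ n : ℕ, ∑ z : Fin n → Ω, (∏ k, p (z k)) *
      ind (¬ ∏ k, a (z k) ≤ ((2 : ℝ) ^ r) ^ n * ∏ k, b (z k)) ≤ ρ ^ n := by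
  have hl2 : 0 < Real.log 2 := Real.log_pos (by norm_num)
  set l : Ω → ℝ := fun ω => Real.log (a ω) - Real.log (b ω) - r * Real.log 2 with hl
  have hmean : ∑ ω, p ω * l ω < 0 := by
    have e : ∑ ω, p ω * l ω =
        Real.log 2 * (∑ ω, p ω * (Real.logb 2 (a ω) - Real.logb 2 (b ω)) - r) := by
      rw [mul_sub, Finset.mul_sum]
      have : Real.log 2 * r = ∑ ω, p ω * (r * Real.log 2) := by
        rw [← Finset.sum_mul, hp1]; ring
      rw [this, ← Finset.sum_sub_distrib]
      refine Finset.sum_congr rfl fun ω _ => ?_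
      simp only [hl, Real.logb]
      field_simp
    rw [e]
    exact mul_neg_of_pos_of_neg hl2 (by linarith)
  -- the moment generating function of `l` has negative derivative at `0`
  have hder : HasDerivAt (fun x : ℝ => ∑ ω, p ω * Real.exp (x * l ω)) (∑ ω, p ω * l ω) 0 := by
    have := HasDerivAt.fun_sum (u := Finset.univ) (A := fun ω (x : ℝ) => p ω * Real.exp (x * l ω))
      (A' := fun ω => p ω * l ω) (x := (0 : ℝ)) (fun ω _ => by
        have h1 : HasDerivAt (fun x : ℝ => x * l ω) (l ω) 0 := by
          simpa using (hasDerivAt_id (0 : ℝ)).mul_const (l ω)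
        simpa using h1.exp.const_mul (p ω))
    exact this
  have hev := (hder.tendsto_slope_zero_right).eventually (gt_mem_nhds hmean)
  obtain ⟨x, hx, hxpos⟩ := (hev.and self_mem_nhdsWithin).exists
  have hxpos : 0 < x := hxpos
  simp only [zero_add, zero_mul, Real.exp_zero, mul_one, hp1, smul_eq_mul] at hx
  refine ⟨∑ ω, p ω * Real.exp (x * l ω), Finset.sum_nonneg fun ω _ =>
    mul_nonneg (hp ω) (Real.exp_pos _).le, ?_, fun n => ?_⟩
  · have := (pos_iff_neg_of_mul_neg hx).1 (inv_pos.2 hxpos)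
    linarith
  have e : (∑ ω, p ω * Real.exp (x * l ω)) ^ n =
      ∑ z : Fin n → Ω, ∏ k, p (z k) * Real.exp (x * l (z k)) := by
    rw [sum_pi_prod (fun _ : Fin n => fun ω => p ω * Real.exp (x * l ω))]
    simp
  rw [e]
  refine Finset.sum_le_sum fun z _ => ?_
  rw [Finset.prod_mul_distrib]
  have hz0 : 0 ≤ ∏ k, p (z k) := Finset.prod_nonneg fun k _ => hp _
  rcases hz0.eq_or_lt with hz | hz
  · rw [← hz]; simp
  refine mul_le_mul_of_nonneg_left ?_ hz0
  have hpk : ∀ k, 0 < p (z k) := fun k => (hp _).lt_of_ne fun h0 =>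
    hz.ne' (Finset.prod_eq_zero (Finset.mem_univ k) h0.symm)
  by_cases hP : ∏ k, a (z k) ≤ ((2 : ℝ) ^ r) ^ n * ∏ k, b (z k)
  · rw [ind_false (not_not.2 hP)]
    exact Finset.prod_nonneg fun k _ => (Real.exp_pos _).le
  rw [ind_true hP, ← Real.exp_sum, Real.one_le_exp_iff, ← Finset.mul_sum]
  refine mul_nonneg hxpos.le ?_
  have hbk : 0 < ∏ k, b (z k) := Finset.prod_pos fun k _ => hb _ (hpk k)
  have h2 := Real.log_lt_log (by positivity) (not_le.1 hP)
  rw [Real.log_mul (by positivity) hbk.ne', Real.log_prod fun k _ => (hb _ (hpk k)).ne',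
    Real.log_prod fun k _ => (ha _ (hpk k)).ne', Real.log_pow, Real.log_rpow (by norm_num)] at h2
  simp only [hl, Finset.sum_sub_distrib, Finset.sum_const, Finset.card_univ, Fintype.card_fin,
    nsmul_eq_mul]
  linarith

/-- A sequence of pairs is a pair of sequences. -/
lemma sum_arrow_prod {n : ℕ} {α β : Type*} [Fintype α] [Fintype β] (F : (Fin n → α × β) → ℝ) :
    ∑ z, F z = ∑ a : Fin n → α, ∑ b : Fin n → β, F (fun k => (a k, b k)) := by
  rw [← Fintype.sum_prod_type']
  exact Fintype.sum_equiv (Equiv.arrowProdEquivProdArrow _ _ _) _ _ fun z => rfl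

lemma sum_prod_arrow {n : ℕ} {α : Type*} [Fintype α] (f : Fin n → α → ℝ) :
    ∑ a : Fin n → α, ∏ k, f k (a k) = ∏ k, ∑ a, f k a := sum_pi_prod f

lemma sum_prod_arrow₂ {n : ℕ} {α β : Type*} [Fintype α] [Fintype β] (f : Fin n → α → β → ℝ) :
    ∑ a : Fin n → α, ∑ b : Fin n → β, ∏ k, f k (a k) (b k) = ∏ k, ∑ a, ∑ b, f k a b :=
  (Finset.sum_congr rfl fun a _ => sum_prod_arrow fun k => f k (a k)).trans
    (sum_prod_arrow fun k a => ∑ b, f k a b)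

lemma sum_prod_arrow₃ {n : ℕ} {α β γ : Type*} [Fintype α] [Fintype β] [Fintype γ]
    (f : Fin n → α → β → γ → ℝ) :
    ∑ a : Fin n → α, ∑ b : Fin n → β, ∑ c : Fin n → γ, ∏ k, f k (a k) (b k) (c k) =
      ∏ k, ∑ a, ∑ b, ∑ c, f k a b c :=
  (Finset.sum_congr rfl fun a _ => sum_prod_arrow₂ fun k => f k (a k)).trans
    (sum_prod_arrow fun k a => ∑ b, ∑ c, f k a b c)

lemma ind_not_and_le (P Q : Prop) : ind (¬ (P ∧ Q)) ≤ ind (¬ P) + ind (¬ Q) := by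
  by_cases hP : P <;> by_cases hQ : Q <;> simp [ind, hP, hQ]

/-- A test of the form `a ≤ c b` lets through a total mass `a` of at most `c` times the mass
of `b`. -/
lemma sum_test_le {ι : Type*} [Fintype ι] (a b : ι → ℝ) {c : ℝ} (hc : 0 ≤ c) (hb : ∀ i, 0 ≤ b i)
    (hb1 : ∑ i, b i ≤ 1) (P : ι → Prop) (hP : ∀ i, P i → a i ≤ c * b i) :
    ∑ i, a i * ind (P i) ≤ c := by
  calc ∑ i, a i * ind (P i) ≤ ∑ i, c * b i := by
        refine Finset.sum_le_sum fun i _ => ?_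
        by_cases h : P i
        · rw [ind_true h, mul_one]; exact hP i h
        · rw [ind_false h, mul_zero]; exact mul_nonneg hc (hb i)
    _ ≤ c := by rw [← Finset.mul_sum]; exact mul_le_of_le_one_right hc hb1

/-- The satellite test, run against the conditional law `C` given the cloud centre. -/
lemma satellite_test_le {n : ℕ} {S W U Y : Type*} [Fintype S] [Fintype U]
    (q1 : S → W → U → ℝ) (C : S → W → U → Y → ℝ) (hC : ∀ s w u y, 0 ≤ C s w u y)
    (hCs : ∀ w y, ∑ s, ∑ u, C s w u y ≤ 1) {c : ℝ} (hc : 0 ≤ c)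
    (P : (Fin n → S) → (Fin n → W) → (Fin n → U) → (Fin n → Y) → Prop)
    (hP : ∀ s w u y, P s w u y →
      ∏ k, q1 (s k) (w k) (u k) ≤ c * ∏ k, C (s k) (w k) (u k) (y k))
    (w : Fin n → W) (y : Fin n → Y) :
    ∑ s, ∑ u, (∏ k, q1 (s k) (w k) (u k)) * ind (P s w u y) ≤ c := by
  rw [← Fintype.sum_prod_type']
  refine sum_test_le (fun i : (Fin n → S) × (Fin n → U) => ∏ k, q1 (i.1 k) (w k) (i.2 k))
    (fun i => ∏ k, C (i.1 k) (w k) (i.2 k) (y k)) hc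
    (fun i => Finset.prod_nonneg fun k _ => hC _ _ _ _) ?_ (fun i => P i.1 w i.2 y)
    (fun i h => hP _ _ _ _ h)
  rw [Fintype.sum_prod_type]
  rw [sum_prod_arrow₂ (fun k s u => C s (w k) u (y k))]
  exact Finset.prod_le_one (fun _ _ => Finset.sum_nonneg fun _ _ => Finset.sum_nonneg
    fun _ _ => hC _ _ _ _) fun _ _ => hCs _ _

/-- The joint test of cloud centre and satellite, run against the law `C`. -/
lemma cloud_test_le {n : ℕ} {S W U Y : Type*} [Fintype S] [Fintype W] [Fintype U]
    (q0 : W → ℝ) (q1 : S → W → U → ℝ) (C : S → W → U → Y → ℝ) (hC : ∀ s w u y, 0 ≤ C s w u y)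
    (hCs : ∀ y, ∑ s, ∑ w, ∑ u, C s w u y ≤ 1) {c : ℝ} (hc : 0 ≤ c)
    (P : (Fin n → S) → (Fin n → W) → (Fin n → U) → (Fin n → Y) → Prop)
    (hP : ∀ s w u y, P s w u y →
      ∏ k, q0 (w k) * q1 (s k) (w k) (u k) ≤ c * ∏ k, C (s k) (w k) (u k) (y k))
    (y : Fin n → Y) :
    ∑ s, ∑ w, (∏ k, q0 (w k)) * ∑ u, (∏ k, q1 (s k) (w k) (u k)) * ind (P s w u y) ≤ c := by
  have := sum_test_le (fun i : (Fin n → S) × (Fin n → W) × (Fin n → U) =>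
      ∏ k, q0 (i.2.1 k) * q1 (i.1 k) (i.2.1 k) (i.2.2 k))
    (fun i => ∏ k, C (i.1 k) (i.2.1 k) (i.2.2 k) (y k)) hc
    (fun i => Finset.prod_nonneg fun k _ => hC _ _ _ _) (by
      rw [Fintype.sum_prod_type]
      simp_rw [Fintype.sum_prod_type]
      rw [sum_prod_arrow₃ (fun k s w u => C s w u (y k))]
      exact Finset.prod_le_one (fun _ _ => Finset.sum_nonneg fun _ _ => Finset.sum_nonneg
        fun _ _ => Finset.sum_nonneg fun _ _ => hC _ _ _ _) fun _ _ => hCs _)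
    (fun i => P i.1 i.2.1 i.2.2 y) (fun i h => hP _ _ _ _ h)
  rw [Fintype.sum_prod_type] at this
  simp_rw [Fintype.sum_prod_type] at this
  refine le_trans (le_of_eq ?_) this
  refine Finset.sum_congr rfl fun s _ => Finset.sum_congr rfl fun w _ => ?_
  rw [Finset.mul_sum]
  refine Finset.sum_congr rfl fun u _ => ?_
  rw [Finset.prod_mul_distrib, mul_assoc]

/-- The probability of an event under the `n`-letter law, written as an iterated sum. -/
lemma iterated_sum_eq {n : ℕ} {S T W U V X Y1 Y2 : Type*}
    [Fintype S] [Fintype T] [Fintype W] [Fintype U] [Fintype V] [Fintype X]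
    [Fintype Y1] [Fintype Y2] (pST : S → T → ℝ) (chan : X → Y1 → Y2 → ℝ)
    (pWUV : S → T → W → U → V → ℝ) (pX : W → U → V → X → ℝ)
    (p : Omega8 S T W U V X Y1 Y2 → ℝ)
    (hp : ∀ s t w u v x y1 y2,
      p (s, t, w, u, v, x, y1, y2) =
        pST s t * pWUV s t w u v * pX w u v x * chan x y1 y2)
    (Q : (Fin n → Omega8 S T W U V X Y1 Y2) → ℝ) :
    ∑ s : Fin n → S, ∑ t : Fin n → T, (∏ k, pST (s k) (t k)) * ∑ w : Fin n → W, ∑ u : Fin n → U,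
      ∑ v : Fin n → V, ∑ x : Fin n → X, ∑ y1 : Fin n → Y1, ∑ y2 : Fin n → Y2,
      (∏ k, pWUV (s k) (t k) (w k) (u k) (v k)) * ((∏ k, pX (w k) (u k) (v k) (x k)) *
        ((∏ k, chan (x k) (y1 k) (y2 k)) *
          Q fun k => (s k, t k, w k, u k, v k, x k, y1 k, y2 k))) =
      ∑ z, (∏ k, p (z k)) * Q z := by
  simp only [sum_arrow_prod, hp, Finset.prod_mul_distrib]
  refine Finset.sum_congr rfl fun s _ => Finset.sum_congr rfl fun t _ => ?_
  simp only [Finset.mul_sum]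
  refine Finset.sum_congr rfl fun w _ => Finset.sum_congr rfl fun u _ =>
    Finset.sum_congr rfl fun v _ => Finset.sum_congr rfl fun x _ =>
    Finset.sum_congr rfl fun y1 _ => Finset.sum_congr rfl fun y2 _ => ?_
  ring

end nLetter

/-! ### From single-letter rates to block codes -/

section coding
open Filter Topology

set_option maxHeartbeats 1000000 in
/-- The coding theorem with an explicit choice of codebook laws and rates.  The codebook laws are
the `n`-fold products of `q0, q1, q2`, with `2 ^ (n R0)` cloud centres and `2 ^ (n R1)`,
`2 ^ (n R2)` satellites.  `C1, C1', C2, C2'` are the (conditional) laws against which the decoders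
run their likelihood-ratio tests. -/
lemma sendable_of_rates {S T W U V X Y1 Y2 : Type*}
    [Fintype S] [Fintype T] [Fintype W] [Fintype U] [Fintype V] [Fintype X]
    [Fintype Y1] [Fintype Y2] [DecidableEq S] [DecidableEq T]
    (pST : S → T → ℝ) (hpSTnn : ∀ s t, 0 ≤ pST s t) (hpSTsum : ∑ s : S, ∑ t : T, pST s t = 1)
    (chan : X → Y1 → Y2 → ℝ) (hchannn : ∀ x y1 y2, 0 ≤ chan x y1 y2)
    (hchansum : ∀ x, ∑ y1 : Y1, ∑ y2 : Y2, chan x y1 y2 = 1)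
    (pWUV : S → T → W → U → V → ℝ) (hpWUVnn : ∀ s t w u v, 0 ≤ pWUV s t w u v)
    (hpWUVsum : ∀ s t, ∑ w : W, ∑ u : U, ∑ v : V, pWUV s t w u v = 1)
    (pX : W → U → V → X → ℝ) (hpXnn : ∀ w u v x, 0 ≤ pX w u v x)
    (hpXsum : ∀ w u v, ∑ x : X, pX w u v x = 1)
    (p : Omega8 S T W U V X Y1 Y2 → ℝ)
    (hp : ∀ s t w u v x y1 y2,
      p (s, t, w, u, v, x, y1, y2) =
        pST s t * pWUV s t w u v * pX w u v x * chan x y1 y2)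
    (hp0 : ∀ ω, 0 ≤ p ω) (hp1 : ∑ ω, p ω = 1)
    (q0 : W → ℝ) (q1 : S → W → U → ℝ) (q2 : T → W → V → ℝ)
    (hq0 : ∀ w, 0 ≤ q0 w) (hq1 : ∀ s w u, 0 ≤ q1 s w u) (hq2 : ∀ t w v, 0 ≤ q2 t w v)
    (hq0s : ∑ w, q0 w ≤ 1) (hq1s : ∀ s w, ∑ u, q1 s w u ≤ 1) (hq2s : ∀ t w, ∑ v, q2 t w v ≤ 1)
    (C1 C1' : S → W → U → Y1 → ℝ) (C2 C2' : T → W → V → Y2 → ℝ)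
    (hC1 : ∀ s w u y, 0 ≤ C1 s w u y) (hC1' : ∀ s w u y, 0 ≤ C1' s w u y)
    (hC2 : ∀ t w v y, 0 ≤ C2 t w v y) (hC2' : ∀ t w v y, 0 ≤ C2' t w v y)
    (hC1s : ∀ w y, ∑ s, ∑ u, C1 s w u y ≤ 1) (hC1s' : ∀ y, ∑ s, ∑ w, ∑ u, C1' s w u y ≤ 1)
    (hC2s : ∀ w y, ∑ t, ∑ v, C2 t w v y ≤ 1) (hC2s' : ∀ y, ∑ t, ∑ w, ∑ v, C2' t w v y ≤ 1)
    (hpos : ∀ ω, 0 < p ω → 0 < q0 (bW ω) ∧ 0 < q1 (bS ω) (bW ω) (bU ω) ∧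
      0 < q2 (bT ω) (bW ω) (bV ω) ∧
      0 < C1 (bS ω) (bW ω) (bU ω) (bY1 ω) ∧ 0 < C1' (bS ω) (bW ω) (bU ω) (bY1 ω) ∧
      0 < C2 (bT ω) (bW ω) (bV ω) (bY2 ω) ∧ 0 < C2' (bT ω) (bW ω) (bV ω) (bY2 ω))
    (R0 R1 R2 δ : ℝ) (hδ : 0 < δ)
    (c0 : ∑ ω, p ω * (Real.logb 2 (∑ u, ∑ v, pWUV (bS ω) (bT ω) (bW ω) u v) -
      Real.logb 2 (q0 (bW ω))) < R0 - δ)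
    (c1 : ∑ ω, p ω * (Real.logb 2 (∑ v, pWUV (bS ω) (bT ω) (bW ω) (bU ω) v) -
      Real.logb 2 (q0 (bW ω) * q1 (bS ω) (bW ω) (bU ω))) < R0 + R1 - δ)
    (c2 : ∑ ω, p ω * (Real.logb 2 (∑ u, pWUV (bS ω) (bT ω) (bW ω) u (bV ω)) -
      Real.logb 2 (q0 (bW ω) * q2 (bT ω) (bW ω) (bV ω))) < R0 + R2 - δ)
    (c12 : ∑ ω, p ω * (Real.logb 2 (pWUV (bS ω) (bT ω) (bW ω) (bU ω) (bV ω)) -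
      Real.logb 2 (q0 (bW ω) * (q1 (bS ω) (bW ω) (bU ω) * q2 (bT ω) (bW ω) (bV ω)))) <
      R0 + R1 + R2 - δ)
    (d1 : ∑ ω, p ω * (Real.logb 2 (q1 (bS ω) (bW ω) (bU ω)) -
      Real.logb 2 (C1 (bS ω) (bW ω) (bU ω) (bY1 ω))) < - R1 - δ)
    (d1' : ∑ ω, p ω * (Real.logb 2 (q0 (bW ω) * q1 (bS ω) (bW ω) (bU ω)) -
      Real.logb 2 (C1' (bS ω) (bW ω) (bU ω) (bY1 ω))) < - (R0 + R1) - δ)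
    (d2 : ∑ ω, p ω * (Real.logb 2 (q2 (bT ω) (bW ω) (bV ω)) -
      Real.logb 2 (C2 (bT ω) (bW ω) (bV ω) (bY2 ω))) < - R2 - δ)
    (d2' : ∑ ω, p ω * (Real.logb 2 (q0 (bW ω) * q2 (bT ω) (bW ω) (bV ω)) -
      Real.logb 2 (C2' (bT ω) (bW ω) (bV ω) (bY2 ω))) < - (R0 + R2) - δ) :
    BCSendable pST chan := by
  -- all alphabets are nonempty because the laws have total mass one
  have neS : Nonempty S := by
    by_contra h; rw [not_nonempty_iff] at h; simp at hpSTsum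
  have neT : Nonempty T := by
    by_contra h; rw [not_nonempty_iff] at h; simp at hpSTsum
  obtain ⟨s0⟩ := id neS
  obtain ⟨t0⟩ := id neT
  have neW : Nonempty W := by
    by_contra h; rw [not_nonempty_iff] at h; simpa using hpWUVsum s0 t0
  have neU : Nonempty U := by
    by_contra h; rw [not_nonempty_iff] at h; simpa using hpWUVsum s0 t0
  have neV : Nonempty V := by
    by_contra h; rw [not_nonempty_iff] at h; simpa using hpWUVsum s0 t0
  have neX : Nonempty X := by
    by_contra h; rw [not_nonempty_iff] at h
    simpa using hpXsum (Classical.arbitrary W) (Classical.arbitrary U) (Classical.arbitrary V)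
  -- on the support of `p` the four sums of `pWUV` are positive
  have hκpos : ∀ ω, 0 < p ω → 0 < pWUV (bS ω) (bT ω) (bW ω) (bU ω) (bV ω) := by
    rintro ⟨s, t, w, u, v, x, y1, y2⟩ h
    rw [hp] at h
    refine (hpWUVnn _ _ _ _ _).lt_of_ne fun h0 => ?_
    simp only [bS, bT, bW, bU, bV] at h0
    rw [← h0] at h
    simp at h
  have k1 : ∀ ω, 0 < p ω → 0 < ∑ v, pWUV (bS ω) (bT ω) (bW ω) (bU ω) v := fun ω h =>
    (hκpos ω h).trans_le (Finset.single_le_sum (f := fun v => pWUV (bS ω) (bT ω) (bW ω) (bU ω) v)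
      (fun _ _ => hpWUVnn _ _ _ _ _) (Finset.mem_univ _))
  have k2 : ∀ ω, 0 < p ω → 0 < ∑ u, pWUV (bS ω) (bT ω) (bW ω) u (bV ω) := fun ω h =>
    (hκpos ω h).trans_le (Finset.single_le_sum (f := fun u => pWUV (bS ω) (bT ω) (bW ω) u (bV ω))
      (fun _ _ => hpWUVnn _ _ _ _ _) (Finset.mem_univ _))
  have k0 : ∀ ω, 0 < p ω → 0 < ∑ u, ∑ v, pWUV (bS ω) (bT ω) (bW ω) u v := fun ω h =>
    (k1 ω h).trans_le (Finset.single_le_sum (f := fun u => ∑ v, pWUV (bS ω) (bT ω) (bW ω) u v)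
      (fun _ _ => Finset.sum_nonneg fun _ _ => hpWUVnn _ _ _ _ _) (Finset.mem_univ _))
  obtain ⟨ρ1, l1, u1, b1⟩ := chernoff p hp0 hp1 _ _ k0 (fun ω h => (hpos ω h).1) _ c0
  obtain ⟨ρ2, l2, u2, b2⟩ := chernoff p hp0 hp1 _ _ k1
    (fun ω h => mul_pos (hpos ω h).1 (hpos ω h).2.1) _ c1
  obtain ⟨ρ3, l3, u3, b3⟩ := chernoff p hp0 hp1 _ _ k2
    (fun ω h => mul_pos (hpos ω h).1 (hpos ω h).2.2.1) _ c2
  obtain ⟨ρ4, l4, u4, b4⟩ := chernoff p hp0 hp1 _ _ hκpos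
    (fun ω h => mul_pos (hpos ω h).1 (mul_pos (hpos ω h).2.1 (hpos ω h).2.2.1)) _ c12
  obtain ⟨ρ5, l5, u5, b5⟩ := chernoff p hp0 hp1 _ _ (fun ω h => (hpos ω h).2.1)
    (fun ω h => (hpos ω h).2.2.2.1) _ d1
  obtain ⟨ρ6, l6, u6, b6⟩ := chernoff p hp0 hp1 _ _
    (fun ω h => mul_pos (hpos ω h).1 (hpos ω h).2.1) (fun ω h => (hpos ω h).2.2.2.2.1) _ d1'
  obtain ⟨ρ7, l7, u7, b7⟩ := chernoff p hp0 hp1 _ _ (fun ω h => (hpos ω h).2.2.1)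
    (fun ω h => (hpos ω h).2.2.2.2.2.1) _ d2
  obtain ⟨ρ8, l8, u8, b8⟩ := chernoff p hp0 hp1 _ _
    (fun ω h => mul_pos (hpos ω h).1 (hpos ω h).2.2.1) (fun ω h => (hpos ω h).2.2.2.2.2.2) _ d2'
  set g : ℝ := (2 : ℝ) ^ (-δ) with hg
  have hg0 : 0 ≤ g := by positivity
  have hg1 : g < 1 := Real.rpow_lt_one_of_one_lt_of_neg (by norm_num) (by linarith)
  intro ε hε
  have hlim : Tendsto (fun n : ℕ => 12 * (ρ1 ^ n + ρ2 ^ n + ρ3 ^ n + ρ4 ^ n + ρ5 ^ n + ρ6 ^ n +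
      ρ7 ^ n + ρ8 ^ n) + 136 * g ^ n) atTop (𝓝 0) := by
    have t1 := tendsto_pow_atTop_nhds_zero_of_lt_one l1 u1
    have t2 := tendsto_pow_atTop_nhds_zero_of_lt_one l2 u2
    have t3 := tendsto_pow_atTop_nhds_zero_of_lt_one l3 u3
    have t4 := tendsto_pow_atTop_nhds_zero_of_lt_one l4 u4
    have t5 := tendsto_pow_atTop_nhds_zero_of_lt_one l5 u5
    have t6 := tendsto_pow_atTop_nhds_zero_of_lt_one l6 u6
    have t7 := tendsto_pow_atTop_nhds_zero_of_lt_one l7 u7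
    have t8 := tendsto_pow_atTop_nhds_zero_of_lt_one l8 u8
    have t9 := tendsto_pow_atTop_nhds_zero_of_lt_one hg0 hg1
    have := ((((((((t1.add t2).add t3).add t4).add t5).add t6).add t7).add t8).const_mul 12).add
      (t9.const_mul 136)
    simpa using this
  obtain ⟨N, hN⟩ := eventually_atTop.1 (hlim.eventually (gt_mem_nhds hε))
  refine ⟨N, fun n hn => ?_⟩
  have hNn := hN n hn
  -- powers of two
  have pw : ∀ a b c : ℝ, a + b = c → ((2 : ℝ) ^ a) ^ n * ((2 : ℝ) ^ b) ^ n = ((2 : ℝ) ^ c) ^ n := by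
    intro a b c h
    rw [← mul_pow, ← Real.rpow_add (by norm_num), h]
  have pn : ∀ a : ℝ, 0 ≤ ((2 : ℝ) ^ a) ^ n := fun a => by positivity
  -- the covering event `E` and the two decoding tests `A1`, `A2`
  obtain ⟨E, hE⟩ : ∃ E : (Fin n → S) → (Fin n → T) → (Fin n → W) → (Fin n → U) → (Fin n → V) → Prop,
      ∀ s t w u v, E s t w u v ↔
      (∏ k, ∑ u, ∑ v, pWUV (s k) (t k) (w k) u v ≤ ((2 : ℝ) ^ (R0 - δ)) ^ n * ∏ k, q0 (w k)) ∧
      (∏ k, ∑ v, pWUV (s k) (t k) (w k) (u k) v ≤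
        ((2 : ℝ) ^ (R0 + R1 - δ)) ^ n * ∏ k, q0 (w k) * q1 (s k) (w k) (u k)) ∧
      (∏ k, ∑ u, pWUV (s k) (t k) (w k) u (v k) ≤
        ((2 : ℝ) ^ (R0 + R2 - δ)) ^ n * ∏ k, q0 (w k) * q2 (t k) (w k) (v k)) ∧
      (∏ k, pWUV (s k) (t k) (w k) (u k) (v k) ≤ ((2 : ℝ) ^ (R0 + R1 + R2 - δ)) ^ n *
        ∏ k, q0 (w k) * (q1 (s k) (w k) (u k) * q2 (t k) (w k) (v k))) :=
    ⟨_, fun _ _ _ _ _ => Iff.rfl⟩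
  obtain ⟨A1, hA1⟩ : ∃ A1 : (Fin n → S) → (Fin n → W) → (Fin n → U) → (Fin n → Y1) → Prop,
      ∀ s w u y, A1 s w u y ↔
      (∏ k, q1 (s k) (w k) (u k) ≤
        ((2 : ℝ) ^ (- R1 - δ)) ^ n * ∏ k, C1 (s k) (w k) (u k) (y k)) ∧
      (∏ k, q0 (w k) * q1 (s k) (w k) (u k) ≤
        ((2 : ℝ) ^ (- (R0 + R1) - δ)) ^ n * ∏ k, C1' (s k) (w k) (u k) (y k)) :=
    ⟨_, fun _ _ _ _ => Iff.rfl⟩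
  obtain ⟨A2, hA2⟩ : ∃ A2 : (Fin n → T) → (Fin n → W) → (Fin n → V) → (Fin n → Y2) → Prop,
      ∀ t w v y, A2 t w v y ↔
      (∏ k, q2 (t k) (w k) (v k) ≤
        ((2 : ℝ) ^ (- R2 - δ)) ^ n * ∏ k, C2 (t k) (w k) (v k) (y k)) ∧
      (∏ k, q0 (w k) * q2 (t k) (w k) (v k) ≤
        ((2 : ℝ) ^ (- (R0 + R2) - δ)) ^ n * ∏ k, C2' (t k) (w k) (v k) (y k)) :=
    ⟨_, fun _ _ _ _ => Iff.rfl⟩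
  -- the union bound over the eight likelihood-ratio tests
  have hη : ∑ s : Fin n → S, ∑ t : Fin n → T, (∏ k, pST (s k) (t k)) * ∑ w : Fin n → W,
      ∑ u : Fin n → U, ∑ v : Fin n → V, ∑ x : Fin n → X, ∑ y1 : Fin n → Y1, ∑ y2 : Fin n → Y2,
      (∏ k, pWUV (s k) (t k) (w k) (u k) (v k)) * ((∏ k, pX (w k) (u k) (v k) (x k)) *
        ((∏ k, chan (x k) (y1 k) (y2 k)) *
          ind (¬ (E s t w u v ∧ A1 s w u y1 ∧ A2 t w v y2)))) ≤
      ρ1 ^ n + ρ2 ^ n + ρ3 ^ n + ρ4 ^ n + ρ5 ^ n + ρ6 ^ n + ρ7 ^ n + ρ8 ^ n := by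
    have hb := add_le_add (add_le_add (add_le_add (add_le_add (add_le_add (add_le_add
      (add_le_add (b1 n) (b2 n)) (b3 n)) (b4 n)) (b5 n)) (b6 n)) (b7 n)) (b8 n)
    refine le_trans ?_ hb
    refine (iterated_sum_eq pST chan pWUV pX p hp (fun z => ind (¬ (
      E (fun k => bS (z k)) (fun k => bT (z k)) (fun k => bW (z k)) (fun k => bU (z k))
        (fun k => bV (z k)) ∧
      A1 (fun k => bS (z k)) (fun k => bW (z k)) (fun k => bU (z k)) (fun k => bY1 (z k)) ∧
      A2 (fun k => bT (z k)) (fun k => bW (z k)) (fun k => bV (z k))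
        (fun k => bY2 (z k)))))).trans_le ?_
    rw [← Finset.sum_add_distrib, ← Finset.sum_add_distrib, ← Finset.sum_add_distrib,
      ← Finset.sum_add_distrib, ← Finset.sum_add_distrib, ← Finset.sum_add_distrib,
      ← Finset.sum_add_distrib]
    refine Finset.sum_le_sum fun z _ => ?_
    simp only [← mul_add]
    refine mul_le_mul_of_nonneg_left ?_ (Finset.prod_nonneg fun k _ => hp0 _)
    rw [hE, hA1, hA2]
    refine (ind_not_and_le _ _).trans ?_
    refine (add_le_add ((ind_not_and_le _ _).trans (add_le_add_right ((ind_not_and_le _ _).trans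
      (add_le_add_right (ind_not_and_le _ _) _)) _)) ((ind_not_and_le _ _).trans
      (add_le_add (ind_not_and_le _ _) (ind_not_and_le _ _)))).trans (le_of_eq ?_)
    ring
  obtain ⟨enc, φ1, φ2, hcode⟩ := one_shot_sub
    (S := Fin n → S) (T := Fin n → T) (W := Fin n → W) (U := Fin n → U) (V := Fin n → V)
    (X := Fin n → X) (Y1 := Fin n → Y1) (Y2 := Fin n → Y2)
    (q0 := fun w => ∏ k, q0 (w k)) (q1 := fun s w u => ∏ k, q1 (s k) (w k) (u k))
    (q2 := fun t w v => ∏ k, q2 (t k) (w k) (v k))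
    (fun w => Finset.prod_nonneg fun k _ => hq0 _)
    (fun s w u => Finset.prod_nonneg fun k _ => hq1 _ _ _)
    (fun t w v => Finset.prod_nonneg fun k _ => hq2 _ _ _)
    (by
      rw [sum_prod_arrow (fun _ => q0)]
      exact Finset.prod_le_one (fun _ _ => Finset.sum_nonneg fun _ _ => hq0 _) fun _ _ => hq0s)
    (fun s w => by
      rw [sum_prod_arrow (fun k => q1 (s k) (w k))]
      exact Finset.prod_le_one (fun _ _ => Finset.sum_nonneg fun _ _ => hq1 _ _ _)
        fun _ _ => hq1s _ _)
    (fun t w => by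
      rw [sum_prod_arrow (fun k => q2 (t k) (w k))]
      exact Finset.prod_le_one (fun _ _ => Finset.sum_nonneg fun _ _ => hq2 _ _ _)
        fun _ _ => hq2s _ _)
    (fun s t => ∏ k, pST (s k) (t k)) (fun s t => Finset.prod_nonneg fun k _ => hpSTnn _ _)
    (by rw [sum_prod_arrow₂ (fun _ => pST), hpSTsum, Finset.prod_const_one])
    (fun s t w u v => ∏ k, pWUV (s k) (t k) (w k) (u k) (v k))
    (fun s t w u v => Finset.prod_nonneg fun k _ => hpWUVnn _ _ _ _ _)
    (fun s t => by
      rw [sum_prod_arrow₃ (fun k => pWUV (s k) (t k))]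
      exact Finset.prod_eq_one fun _ _ => hpWUVsum _ _)
    (fun w u v x => ∏ k, pX (w k) (u k) (v k) (x k))
    (fun w u v x => Finset.prod_nonneg fun k _ => hpXnn _ _ _ _)
    (fun w u v => by
      rw [sum_prod_arrow (fun k => pX (w k) (u k) (v k))]
      exact Finset.prod_eq_one fun _ _ => hpXsum _ _ _)
    (fun x y1 y2 => ∏ k, chan (x k) (y1 k) (y2 k))
    (fun x y1 y2 => Finset.prod_nonneg fun k _ => hchannn _ _ _)
    (fun x => by
      rw [sum_prod_arrow₂ (fun k => chan (x k))]
      exact Finset.prod_eq_one fun _ _ => hchansum _)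
    E A1 A2
    (γ := g ^ n) (η := ρ1 ^ n + ρ2 ^ n + ρ3 ^ n + ρ4 ^ n + ρ5 ^ n + ρ6 ^ n + ρ7 ^ n + ρ8 ^ n)
    (M0 := ((2 : ℝ) ^ R0) ^ n) (M1 := ((2 : ℝ) ^ R1) ^ n) (M2 := ((2 : ℝ) ^ R2) ^ n)
    (by positivity) (by positivity) (by positivity) (by positivity)
    (by
      intro s t w u v h
      rw [sum_prod_arrow₂ (fun k => pWUV (s k) (t k) (w k)), hg,
        pw (-δ) R0 (R0 - δ) (by ring)]
      exact ((hE _ _ _ _ _).1 h).1)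
    (by
      intro s t w u v h
      rw [sum_prod_arrow (fun k => pWUV (s k) (t k) (w k) (u k)), hg,
        pw (-δ) R0 (R0 - δ) (by ring), pw (R0 - δ) R1 (R0 + R1 - δ) (by ring),
        ← Finset.prod_mul_distrib]
      exact ((hE _ _ _ _ _).1 h).2.1)
    (by
      intro s t w u v h
      rw [sum_prod_arrow (fun k u => pWUV (s k) (t k) (w k) u (v k)), hg,
        pw (-δ) R0 (R0 - δ) (by ring), pw (R0 - δ) R2 (R0 + R2 - δ) (by ring),
        ← Finset.prod_mul_distrib]
      exact ((hE _ _ _ _ _).1 h).2.2.1)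
    (by
      intro s t w u v h
      rw [hg, pw (-δ) R0 (R0 - δ) (by ring), pw (R0 - δ) R1 (R0 + R1 - δ) (by ring),
        pw _ R2 (R0 + R1 + R2 - δ) (by ring), ← Finset.prod_mul_distrib,
        ← Finset.prod_mul_distrib]
      exact ((hE _ _ _ _ _).1 h).2.2.2)
    (by
      intro w y
      rw [hg, ← pw R1 (- R1 - δ) (-δ) (by ring)]
      exact mul_le_mul_of_nonneg_left (satellite_test_le q1 C1 hC1 hC1s (pn _) A1
        (fun _ _ _ _ h => ((hA1 _ _ _ _).1 h).1) w y) (pn _))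
    (by
      intro y
      rw [hg, pw R0 R1 _ rfl, ← pw (R0 + R1) (- (R0 + R1) - δ) (-δ) (by ring)]
      exact mul_le_mul_of_nonneg_left (cloud_test_le q0 q1 C1' hC1' hC1s' (pn _) A1
        (fun _ _ _ _ h => ((hA1 _ _ _ _).1 h).2) y) (pn _))
    (by
      intro w y
      rw [hg, ← pw R2 (- R2 - δ) (-δ) (by ring)]
      exact mul_le_mul_of_nonneg_left (satellite_test_le q2 C2 hC2 hC2s (pn _) A2
        (fun _ _ _ _ h => ((hA2 _ _ _ _).1 h).1) w y) (pn _))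
    (by
      intro y
      rw [hg, pw R0 R2 _ rfl, ← pw (R0 + R2) (- (R0 + R2) - δ) (-δ) (by ring)]
      exact mul_le_mul_of_nonneg_left (cloud_test_le q0 q2 C2' hC2' hC2s' (pn _) A2
        (fun _ _ _ _ h => ((hA2 _ _ _ _).1 h).2) y) (pn _))
    hη
  refine ⟨fun st => enc st.1 st.2, φ1, φ2, ?_, ?_⟩
  · refine le_trans ?_ (hcode.trans hNn.le)
    unfold bcPe1
    simp only [Finset.mul_sum]
    refine Finset.sum_le_sum fun s _ => Finset.sum_le_sum fun t _ =>
      Finset.sum_le_sum fun y1 _ => Finset.sum_le_sum fun y2 _ => ?_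
    rw [← mul_assoc]
    have h0 : 0 ≤ (∏ k, pST (s k) (t k)) * ∏ k, chan (enc s t k) (y1 k) (y2 k) :=
      mul_nonneg (Finset.prod_nonneg fun k _ => hpSTnn _ _)
        (Finset.prod_nonneg fun k _ => hchannn _ _ _)
    have h2 := ind_nonneg (φ2 y2 ≠ t)
    have h3 := ind_nonneg (φ1 y1 ≠ s)
    split_ifs with h
    · rw [ind_true h]
      exact le_mul_of_one_le_right h0 (by linarith)
    · exact mul_nonneg h0 (by linarith)
  · refine le_trans ?_ (hcode.trans hNn.le)
    unfold bcPe2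
    simp only [Finset.mul_sum]
    refine Finset.sum_le_sum fun s _ => Finset.sum_le_sum fun t _ =>
      Finset.sum_le_sum fun y1 _ => Finset.sum_le_sum fun y2 _ => ?_
    rw [← mul_assoc]
    have h0 : 0 ≤ (∏ k, pST (s k) (t k)) * ∏ k, chan (enc s t k) (y1 k) (y2 k) :=
      mul_nonneg (Finset.prod_nonneg fun k _ => hpSTnn _ _)
        (Finset.prod_nonneg fun k _ => hchannn _ _ _)
    have h2 := ind_nonneg (φ2 y2 ≠ t)
    have h3 := ind_nonneg (φ1 y1 ≠ s)
    split_ifs with h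
    · rw [ind_true h]
      exact le_mul_of_one_le_right h0 (by linarith)
    · exact mul_nonneg h0 (by linarith)

end coding

/-! ### Entropies of marginals and the choice of rates -/

section entropy

/-- The law of `f` under `p`: the push-forward pmf. -/
noncomputable def law {Ω α : Type*} [Fintype Ω] [DecidableEq α] (p : Ω → ℝ) (f : Ω → α) (a : α) :
    ℝ :=
  ∑ ω, if f ω = a then p ω else 0

variable {Ω α β γ : Type*} [Fintype Ω] [DecidableEq α] [DecidableEq β] [DecidableEq γ]
  {p : Ω → ℝ}

lemma law_nonneg (hp : ∀ ω, 0 ≤ p ω) (f : Ω → α) (a : α) : 0 ≤ law p f a :=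
  Finset.sum_nonneg fun ω _ => by split_ifs; exacts [hp ω, le_rfl]

lemma law_pos (hp : ∀ ω, 0 ≤ p ω) (f : Ω → α) {ω : Ω} (h : 0 < p ω) : 0 < law p f (f ω) := by
  refine h.trans_le ?_
  have := Finset.single_le_sum (f := fun ω' => if f ω' = f ω then p ω' else 0)
    (fun ω' _ => by split_ifs; exacts [hp ω', le_rfl]) (Finset.mem_univ ω)
  simpa [law] using this

lemma sum_law [Fintype α] (p : Ω → ℝ) (f : Ω → α) : ∑ a, law p f a = ∑ ω, p ω := by
  unfold law
  rw [Finset.sum_comm]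
  simp

/-- Marginalisation: `e b` runs through the values of `F` lying over the value `c` of `G`, the
coordinate that is summed out being `k`. -/
lemma law_marg [Fintype β] (F : Ω → α) (G : Ω → γ) (c : γ) (e : β → α) (k : Ω → β)
    (h : ∀ ω b, F ω = e b ↔ k ω = b ∧ G ω = c) : ∑ b, law p F (e b) = law p G c := by
  unfold law
  rw [Finset.sum_comm]
  simp [h, ite_and]

/-- Entropy is minus the mean log-probability. -/
lemma margEnt_eq [Fintype α] (p : Ω → ℝ) (f : Ω → α) :
    margEnt p f = -∑ ω, p ω * Real.logb 2 (law p f (f ω)) := by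
  unfold margEnt
  rw [Finset.sum_neg_distrib]
  congr 1
  simp only [Finset.sum_mul]
  rw [Finset.sum_comm]
  refine Finset.sum_congr rfl fun ω _ => ?_
  rw [Finset.sum_eq_single (f ω)]
  · simp [law]
  · intro b _ hb
    rw [if_neg (Ne.symm hb), zero_mul]
  · simp

lemma margEnt_congr [Fintype α] [Fintype β] (p : Ω → ℝ) (f : Ω → α) (g : Ω → β)
    (h : ∀ ω ω', f ω = f ω' ↔ g ω = g ω') : margEnt p f = margEnt p g := by
  simp [margEnt_eq, law, h]

/-- The mean of a function that agrees on the support of `p` with another one. -/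
lemma mean_congr (hp : ∀ ω, 0 ≤ p ω) (F G : Ω → ℝ) (h : ∀ ω, 0 < p ω → F ω = G ω) :
    ∑ ω, p ω * F ω = ∑ ω, p ω * G ω := by
  refine Finset.sum_congr rfl fun ω _ => ?_
  rcases (hp ω).eq_or_lt with h0 | h0
  · rw [← h0]; simp
  · rw [h ω h0]

/-- Elimination of the codebook rates: the eight strict rate constraints, four from covering
(`a0, a1, a2, a12`) and four from packing (`d1, e1, d2, e2`), are simultaneously satisfiable with
some slack `δ` as soon as the five inequalities below hold. -/
lemma exists_rates {a0 a1 a2 a12 d1 e1 d2 e2 : ℝ} (h1 : a1 < e1) (h2 : a2 < e2)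
    (h3 : a12 < d1 + e2) (h3' : a12 < e1 + d2) (h4 : a0 + a12 < e1 + e2) :
    ∃ R0 R1 R2 δ : ℝ, 0 < δ ∧ a0 < R0 - δ ∧ a1 < R0 + R1 - δ ∧ a2 < R0 + R2 - δ ∧
      a12 < R0 + R1 + R2 - δ ∧ R1 + δ < d1 ∧ R0 + R1 + δ < e1 ∧ R2 + δ < d2 ∧
      R0 + R2 + δ < e2 := by
  obtain ⟨R0, l0, u0⟩ := exists_between
    (show max (max a0 (a1 - d1)) (max (a2 - d2) (a12 - d1 - d2)) < e1 + e2 - a12 by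
      simp only [max_lt_iff]
      (repeat' apply And.intro) <;> linarith)
  simp only [max_lt_iff] at l0
  obtain ⟨⟨l0, l1⟩, l2, l3⟩ := l0
  obtain ⟨R1, m, n⟩ := exists_between
    (show max (a1 - R0) (max (a12 - R0 - d2) (a12 - e2)) < min d1 (e1 - R0) by
      simp only [max_lt_iff, lt_min_iff]
      (repeat' apply And.intro) <;> linarith)
  simp only [max_lt_iff] at m
  rw [lt_min_iff] at n
  obtain ⟨R2, m', n'⟩ := exists_between
    (show max (a2 - R0) (a12 - R0 - R1) < min d2 (e2 - R0) by
      simp only [max_lt_iff, lt_min_iff]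
      (repeat' apply And.intro) <;> linarith)
  simp only [max_lt_iff] at m'
  rw [lt_min_iff] at n'
  obtain ⟨δ, hδ, hδ'⟩ := exists_between
    (show 0 < min (min (min (R0 - a0) (R0 + R1 - a1)) (min (R0 + R2 - a2) (R0 + R1 + R2 - a12)))
      (min (min (d1 - R1) (e1 - R0 - R1)) (min (d2 - R2) (e2 - R0 - R2))) by
      simp only [lt_min_iff]
      (repeat' apply And.intro) <;> linarith)
  simp only [lt_min_iff] at hδ'
  refine ⟨R0, R1, R2, δ, hδ, ?_, ?_, ?_, ?_, ?_, ?_, ?_, ?_⟩ <;> linarith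

lemma sum_div_le_one {ι : Type*} [Fintype ι] (f : ι → ℝ) (c : ℝ) (h : ∑ i, f i = c) :
    ∑ i, f i / c ≤ 1 := by
  rw [← Finset.sum_div, h]
  exact div_self_le_one c

/-! The following facts about the codebook and test laws are stated for a generic receiver with
source `fs`, cloud variable `fw`, satellite variable `fu` and output `fy`; they are used for
`(S, W, U, Y1)` and for `(T, W, V, Y2)`. -/

section receiver
variable {A B C D : Type*}
  [DecidableEq A] [DecidableEq B] [DecidableEq C] [DecidableEq D]
  (fs : Ω → A) (fw : Ω → B) (fu : Ω → C) (fy : Ω → D)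

lemma satellite_law_sum [Fintype C] (s : A) (w : B) :
    ∑ u, law p (fun ω => (fs ω, fw ω, fu ω)) (s, w, u) / law p (fun ω => (fs ω, fw ω)) (s, w) ≤
      1 :=
  sum_div_le_one _ _ (law_marg _ _ (s, w) (fun u => (s, w, u)) fu
    (by intro ω b; simp only [Prod.mk.injEq]; tauto))

lemma satellite_test_law_sum [Fintype A] [Fintype C] (w : B) (y : D) :
    ∑ s, ∑ u, law p (fun ω => (fs ω, fw ω, fu ω, fy ω)) (s, w, u, y) /
      law p (fun ω => (fw ω, fy ω)) (w, y) ≤ 1 := by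
  rw [← Fintype.sum_prod_type']
  exact sum_div_le_one (fun i : A × C => law p (fun ω => (fs ω, fw ω, fu ω, fy ω))
    (i.1, w, i.2, y)) _ (law_marg _ _ (w, y) (fun b : A × C => (b.1, w, b.2, y))
    (fun ω => (fs ω, fu ω)) (by rintro ω ⟨b, b'⟩; simp only [Prod.mk.injEq]; tauto))

lemma cloud_test_law_sum [Fintype A] [Fintype B] [Fintype C] (y : D) :
    ∑ s, ∑ w, ∑ u, law p (fun ω => (fs ω, fw ω, fu ω, fy ω)) (s, w, u, y) / law p fy y ≤ 1 := by
  have := sum_div_le_one (fun i : A × B × C => law p (fun ω => (fs ω, fw ω, fu ω, fy ω))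
    (i.1, i.2.1, i.2.2, y)) _ (law_marg _ fy y (fun b : A × B × C => (b.1, b.2.1, b.2.2, y))
    (fun ω => (fs ω, fw ω, fu ω)) (by rintro ω ⟨b, b', b''⟩; simp only [Prod.mk.injEq]; tauto))
  simpa only [Fintype.sum_prod_type] using this

lemma satellite_test_mean [Fintype A] [Fintype B] [Fintype C] [Fintype D] (hp : ∀ ω, 0 ≤ p ω) :
    ∑ ω, p ω * (Real.logb 2 (law p (fun ω => (fs ω, fw ω, fu ω)) (fs ω, fw ω, fu ω) /
        law p (fun ω => (fs ω, fw ω)) (fs ω, fw ω)) -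
      Real.logb 2 (law p (fun ω => (fs ω, fw ω, fu ω, fy ω)) (fs ω, fw ω, fu ω, fy ω) /
        law p (fun ω => (fw ω, fy ω)) (fw ω, fy ω))) =
      margEnt p (fun ω => (fs ω, fw ω, fu ω, fy ω)) - margEnt p (fun ω => (fw ω, fy ω)) -
        margEnt p (fun ω => (fs ω, fw ω, fu ω)) + margEnt p (fun ω => (fs ω, fw ω)) := by
  simp only [margEnt_eq]
  rw [mean_congr hp _ _ fun ω h => by
    rw [Real.logb_div (law_pos hp (fun ω => (fs ω, fw ω, fu ω)) h).ne'
      (law_pos hp (fun ω => (fs ω, fw ω)) h).ne',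
      Real.logb_div (law_pos hp (fun ω => (fs ω, fw ω, fu ω, fy ω)) h).ne'
      (law_pos hp (fun ω => (fw ω, fy ω)) h).ne']]
  simp only [mul_sub, Finset.sum_sub_distrib]
  ring

lemma cloud_test_mean [Fintype A] [Fintype B] [Fintype C] [Fintype D] (hp : ∀ ω, 0 ≤ p ω) :
    ∑ ω, p ω * (Real.logb 2 (law p fw (fw ω) *
        (law p (fun ω => (fs ω, fw ω, fu ω)) (fs ω, fw ω, fu ω) /
          law p (fun ω => (fs ω, fw ω)) (fs ω, fw ω))) -
      Real.logb 2 (law p (fun ω => (fs ω, fw ω, fu ω, fy ω)) (fs ω, fw ω, fu ω, fy ω) /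
        law p fy (fy ω))) =
      margEnt p (fun ω => (fs ω, fw ω, fu ω, fy ω)) - margEnt p fy - margEnt p fw -
        margEnt p (fun ω => (fs ω, fw ω, fu ω)) + margEnt p (fun ω => (fs ω, fw ω)) := by
  simp only [margEnt_eq]
  rw [mean_congr hp _ _ fun ω h => by
    rw [Real.logb_mul (law_pos hp fw h).ne'
      (div_pos (law_pos hp (fun ω => (fs ω, fw ω, fu ω)) h)
        (law_pos hp (fun ω => (fs ω, fw ω)) h)).ne',
      Real.logb_div (law_pos hp (fun ω => (fs ω, fw ω, fu ω)) h).ne'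
      (law_pos hp (fun ω => (fs ω, fw ω)) h).ne',
      Real.logb_div (law_pos hp (fun ω => (fs ω, fw ω, fu ω, fy ω)) h).ne'
      (law_pos hp fy h).ne']]
  simp only [mul_sub, mul_add, Finset.sum_sub_distrib, Finset.sum_add_distrib]
  ring

end receiver

end entropy

/-! ### The Han-Costa region -/

/-- **Han-Costa region without the common part.**  A correlated source `(S,T)` can be
sent with arbitrarily small probability of error over the broadcast channel `p(y1,y2|x)`
if there are auxiliaries `W, U, V` and an input `X` with `(S,T) → (W,U,V) → X → (Y1,Y2)`
a Markov chain, satisfying the four information inequalities below (which do not involve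
any common part). -/
theorem han_costa_BC_no_common_part
    {S T W U V X Y1 Y2 : Type*}
    [Fintype S] [Fintype T] [Fintype W] [Fintype U] [Fintype V] [Fintype X]
    [Fintype Y1] [Fintype Y2]
    [DecidableEq S] [DecidableEq T] [DecidableEq W] [DecidableEq U]
    [DecidableEq V] [DecidableEq X] [DecidableEq Y1] [DecidableEq Y2]
    -- the source
    (pST : S → T → ℝ) (hpSTnn : ∀ s t, 0 ≤ pST s t) (hpSTsum : ∑ s : S, ∑ t : T, pST s t = 1)
    -- the channel
    (chan : X → Y1 → Y2 → ℝ) (hchannn : ∀ x y1 y2, 0 ≤ chan x y1 y2)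
    (hchansum : ∀ x, ∑ y1 : Y1, ∑ y2 : Y2, chan x y1 y2 = 1)
    -- the auxiliary conditional distributions (giving the Markov chain
    -- (S,T) → (W,U,V) → X → (Y1,Y2))
    (pWUV : S → T → W → U → V → ℝ) (hpWUVnn : ∀ s t w u v, 0 ≤ pWUV s t w u v)
    (hpWUVsum : ∀ s t, ∑ w : W, ∑ u : U, ∑ v : V, pWUV s t w u v = 1)
    (pX : W → U → V → X → ℝ) (hpXnn : ∀ w u v x, 0 ≤ pX w u v x)
    (hpXsum : ∀ w u v, ∑ x : X, pX w u v x = 1)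
    -- the joint distribution of all the variables
    (p : Omega8 S T W U V X Y1 Y2 → ℝ)
    (hp : ∀ s t w u v x y1 y2,
      p (s, t, w, u, v, x, y1, y2) =
        pST s t * pWUV s t w u v * pX w u v x * chan x y1 y2)
    -- the four inequalities
    (h1 : margEnt p bS <
      mi p (fun ω => (bS ω, bW ω, bU ω)) bY1 - cmi p bT (fun ω => (bW ω, bU ω)) bS)
    (h2 : margEnt p bT <
      mi p (fun ω => (bT ω, bW ω, bV ω)) bY2 - cmi p bS (fun ω => (bW ω, bV ω)) bT)
    (h3 : margEnt p (fun ω => (bS ω, bT ω)) <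
      min (mi p bW bY1) (mi p bW bY2)
        + cmi p (fun ω => (bS ω, bU ω)) bY1 bW
        + cmi p (fun ω => (bT ω, bV ω)) bY2 bW
        - cmi p (fun ω => (bS ω, bU ω)) (fun ω => (bT ω, bV ω)) bW)
    (h4 : margEnt p (fun ω => (bS ω, bT ω)) <
      mi p (fun ω => (bS ω, bW ω, bU ω)) bY1 + mi p (fun ω => (bT ω, bW ω, bV ω)) bY2
        - cmi p (fun ω => (bS ω, bU ω)) (fun ω => (bT ω, bV ω)) bW
        - mi p (fun ω => (bS ω, bT ω)) bW) :
    BCSendable pST chan := by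
  have hp0 : ∀ ω, 0 ≤ p ω := by
    rintro ⟨s, t, w, u, v, x, y1, y2⟩
    rw [hp]
    exact mul_nonneg (mul_nonneg (mul_nonneg (hpSTnn _ _) (hpWUVnn _ _ _ _ _)) (hpXnn _ _ _ _))
      (hchannn _ _ _)
  have hp1 : ∑ ω, p ω = 1 := by
    simp only [Fintype.sum_prod_type, hp, ← Finset.mul_sum, hchansum, mul_one, hpXsum, hpWUVsum,
      hpSTsum]
  -- the source and auxiliary laws are marginals of `p`
  have f5 : ∀ s t w u v, law p (fun ω => (bS ω, bT ω, bW ω, bU ω, bV ω)) (s, t, w, u, v) =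
      pST s t * pWUV s t w u v := by
    intro s t w u v
    have : DecidableEq (Omega8 S T W U V X Y1 Y2) := Classical.decEq _
    rw [← law_marg id (fun ω => (bS ω, bT ω, bW ω, bU ω, bV ω)) (s, t, w, u, v)
      (fun b : X × Y1 × Y2 => (s, t, w, u, v, b.1, b.2.1, b.2.2))
      (fun ω => (bX ω, bY1 ω, bY2 ω))
      (by rintro ⟨s, t, w, u, v, x, y1, y2⟩ ⟨x', y1', y2'⟩
          simp only [id, Prod.mk.injEq, bS, bT, bW, bU, bV, bX, bY1, bY2]; tauto)]
    have hid : ∀ ω, law p id ω = p ω := fun ω => by simp [law]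
    simp only [hid, Fintype.sum_prod_type, hp, ← Finset.mul_sum, hchansum, mul_one, hpXsum]
  have f4 : ∀ s t w u, law p (fun ω => (bS ω, bT ω, bW ω, bU ω)) (s, t, w, u) =
      pST s t * ∑ v, pWUV s t w u v := by
    intro s t w u
    rw [← law_marg (fun ω => (bS ω, bT ω, bW ω, bU ω, bV ω)) _ (s, t, w, u)
      (fun v => (s, t, w, u, v)) bV (by intro ω b; simp only [Prod.mk.injEq]; tauto)]
    simp only [f5, Finset.mul_sum]
  have f4' : ∀ s t w v, law p (fun ω => (bS ω, bT ω, bW ω, bV ω)) (s, t, w, v) =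
      pST s t * ∑ u, pWUV s t w u v := by
    intro s t w v
    rw [← law_marg (fun ω => (bS ω, bT ω, bW ω, bU ω, bV ω)) _ (s, t, w, v)
      (fun u => (s, t, w, u, v)) bU (by intro ω b; simp only [Prod.mk.injEq]; tauto)]
    simp only [f5, Finset.mul_sum]
  have f3 : ∀ s t w, law p (fun ω => (bS ω, bT ω, bW ω)) (s, t, w) =
      pST s t * ∑ u, ∑ v, pWUV s t w u v := by
    intro s t w
    rw [← law_marg (fun ω => (bS ω, bT ω, bW ω, bU ω)) _ (s, t, w)
      (fun u => (s, t, w, u)) bU (by intro ω b; simp only [Prod.mk.injEq]; tauto)]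
    simp only [f4, Finset.mul_sum]
  have f2 : ∀ s t, law p (fun ω => (bS ω, bT ω)) (s, t) = pST s t := by
    intro s t
    rw [← law_marg (fun ω => (bS ω, bT ω, bW ω)) _ (s, t)
      (fun w => (s, t, w)) bW (by intro ω b; simp only [Prod.mk.injEq]; tauto)]
    simp only [f3, ← Finset.mul_sum, hpWUVsum, mul_one]
  have hlog : ∀ {a b c : ℝ}, 0 < a → 0 < b → a = b * c →
      Real.logb 2 c = Real.logb 2 a - Real.logb 2 b := by
    intro a b c ha hb h
    rw [eq_sub_iff_add_eq, h, Real.logb_mul hb.ne' (by rintro rfl; simp_all), add_comm]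
  -- logarithms, on the support of `p`, of the conditional laws and of the codebook laws
  have g0 : ∀ ω, 0 < p ω → Real.logb 2 (∑ u, ∑ v, pWUV (bS ω) (bT ω) (bW ω) u v) =
      Real.logb 2 (law p (fun ω => (bS ω, bT ω, bW ω)) (bS ω, bT ω, bW ω)) -
        Real.logb 2 (law p (fun ω => (bS ω, bT ω)) (bS ω, bT ω)) := fun ω h =>
    hlog (law_pos hp0 (fun ω => (bS ω, bT ω, bW ω)) h) (law_pos hp0 (fun ω => (bS ω, bT ω)) h)
      (by rw [f3, f2])
  have g1 : ∀ ω, 0 < p ω → Real.logb 2 (∑ v, pWUV (bS ω) (bT ω) (bW ω) (bU ω) v) =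
      Real.logb 2 (law p (fun ω => (bS ω, bT ω, bW ω, bU ω)) (bS ω, bT ω, bW ω, bU ω)) -
        Real.logb 2 (law p (fun ω => (bS ω, bT ω)) (bS ω, bT ω)) := fun ω h =>
    hlog (law_pos hp0 (fun ω => (bS ω, bT ω, bW ω, bU ω)) h)
      (law_pos hp0 (fun ω => (bS ω, bT ω)) h) (by rw [f4, f2])
  have g2 : ∀ ω, 0 < p ω → Real.logb 2 (∑ u, pWUV (bS ω) (bT ω) (bW ω) u (bV ω)) =
      Real.logb 2 (law p (fun ω => (bS ω, bT ω, bW ω, bV ω)) (bS ω, bT ω, bW ω, bV ω)) -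
        Real.logb 2 (law p (fun ω => (bS ω, bT ω)) (bS ω, bT ω)) := fun ω h =>
    hlog (law_pos hp0 (fun ω => (bS ω, bT ω, bW ω, bV ω)) h)
      (law_pos hp0 (fun ω => (bS ω, bT ω)) h) (by rw [f4', f2])
  have g12 : ∀ ω, 0 < p ω → Real.logb 2 (pWUV (bS ω) (bT ω) (bW ω) (bU ω) (bV ω)) =
      Real.logb 2 (law p (fun ω => (bS ω, bT ω, bW ω, bU ω, bV ω))
        (bS ω, bT ω, bW ω, bU ω, bV ω)) -
        Real.logb 2 (law p (fun ω => (bS ω, bT ω)) (bS ω, bT ω)) := fun ω h =>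
    hlog (law_pos hp0 (fun ω => (bS ω, bT ω, bW ω, bU ω, bV ω)) h)
      (law_pos hp0 (fun ω => (bS ω, bT ω)) h) (by rw [f5, f2])
  have pW : ∀ ω, 0 < p ω → 0 < law p bW (bW ω) := fun ω h => law_pos hp0 bW h
  have pQ1 : ∀ ω, 0 < p ω → 0 < law p (fun ω => (bS ω, bW ω, bU ω)) (bS ω, bW ω, bU ω) /
      law p (fun ω => (bS ω, bW ω)) (bS ω, bW ω) := fun ω h =>
    div_pos (law_pos hp0 (fun ω => (bS ω, bW ω, bU ω)) h) (law_pos hp0 (fun ω => (bS ω, bW ω)) h)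
  have pQ2 : ∀ ω, 0 < p ω → 0 < law p (fun ω => (bT ω, bW ω, bV ω)) (bT ω, bW ω, bV ω) /
      law p (fun ω => (bT ω, bW ω)) (bT ω, bW ω) := fun ω h =>
    div_pos (law_pos hp0 (fun ω => (bT ω, bW ω, bV ω)) h) (law_pos hp0 (fun ω => (bT ω, bW ω)) h)
  have lQ1 : ∀ ω, 0 < p ω → Real.logb 2 (law p (fun ω => (bS ω, bW ω, bU ω)) (bS ω, bW ω, bU ω) /
      law p (fun ω => (bS ω, bW ω)) (bS ω, bW ω)) =
      Real.logb 2 (law p (fun ω => (bS ω, bW ω, bU ω)) (bS ω, bW ω, bU ω)) -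
      Real.logb 2 (law p (fun ω => (bS ω, bW ω)) (bS ω, bW ω)) := fun ω h =>
    Real.logb_div (law_pos hp0 (fun ω => (bS ω, bW ω, bU ω)) h).ne'
      (law_pos hp0 (fun ω => (bS ω, bW ω)) h).ne'
  have lQ2 : ∀ ω, 0 < p ω → Real.logb 2 (law p (fun ω => (bT ω, bW ω, bV ω)) (bT ω, bW ω, bV ω) /
      law p (fun ω => (bT ω, bW ω)) (bT ω, bW ω)) =
      Real.logb 2 (law p (fun ω => (bT ω, bW ω, bV ω)) (bT ω, bW ω, bV ω)) -
      Real.logb 2 (law p (fun ω => (bT ω, bW ω)) (bT ω, bW ω)) := fun ω h =>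
    Real.logb_div (law_pos hp0 (fun ω => (bT ω, bW ω, bV ω)) h).ne'
      (law_pos hp0 (fun ω => (bT ω, bW ω)) h).ne'
  -- the information inequalities in terms of joint entropies
  have i1 : margEnt p (fun ω => (bS ω, bT ω)) - margEnt p (fun ω => (bS ω, bT ω, bW ω, bU ω)) <
      margEnt p bY1 - margEnt p (fun ω => (bS ω, bW ω, bU ω, bY1 ω)) := by
    have e1 : margEnt p (fun ω => ((bS ω, bW ω, bU ω), bY1 ω)) =
        margEnt p (fun ω => (bS ω, bW ω, bU ω, bY1 ω)) :=
      margEnt_congr _ _ _ fun ω ω' => by simp only [Prod.mk.injEq]; tauto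
    have e2 : margEnt p (fun ω => ((bW ω, bU ω), bS ω)) = margEnt p (fun ω => (bS ω, bW ω, bU ω)) :=
      margEnt_congr _ _ _ fun ω ω' => by simp only [Prod.mk.injEq]; tauto
    have e3 : margEnt p (fun ω => (bT ω, (bW ω, bU ω), bS ω)) =
        margEnt p (fun ω => (bS ω, bT ω, bW ω, bU ω)) :=
      margEnt_congr _ _ _ fun ω ω' => by simp only [Prod.mk.injEq]; tauto
    have e4 : margEnt p (fun ω => (bT ω, bS ω)) = margEnt p (fun ω => (bS ω, bT ω)) :=
      margEnt_congr _ _ _ fun ω ω' => by simp only [Prod.mk.injEq]; tauto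
    unfold mi cmi at h1
    rw [e1, e2, e3, e4] at h1
    linarith
  have i2 : margEnt p (fun ω => (bS ω, bT ω)) - margEnt p (fun ω => (bS ω, bT ω, bW ω, bV ω)) <
      margEnt p bY2 - margEnt p (fun ω => (bT ω, bW ω, bV ω, bY2 ω)) := by
    have e1 : margEnt p (fun ω => ((bT ω, bW ω, bV ω), bY2 ω)) =
        margEnt p (fun ω => (bT ω, bW ω, bV ω, bY2 ω)) :=
      margEnt_congr _ _ _ fun ω ω' => by simp only [Prod.mk.injEq]; tauto
    have e2 : margEnt p (fun ω => ((bW ω, bV ω), bT ω)) = margEnt p (fun ω => (bT ω, bW ω, bV ω)) :=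
      margEnt_congr _ _ _ fun ω ω' => by simp only [Prod.mk.injEq]; tauto
    have e3 : margEnt p (fun ω => (bS ω, (bW ω, bV ω), bT ω)) =
        margEnt p (fun ω => (bS ω, bT ω, bW ω, bV ω)) :=
      margEnt_congr _ _ _ fun ω ω' => by simp only [Prod.mk.injEq]; tauto
    unfold mi cmi at h2
    rw [e1, e2, e3] at h2
    linarith
  have r1 : margEnt p (fun ω => ((bS ω, bU ω), bW ω)) = margEnt p (fun ω => (bS ω, bW ω, bU ω)) :=
    margEnt_congr _ _ _ fun ω ω' => by simp only [Prod.mk.injEq]; tauto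
  have r2 : margEnt p (fun ω => ((bT ω, bV ω), bW ω)) = margEnt p (fun ω => (bT ω, bW ω, bV ω)) :=
    margEnt_congr _ _ _ fun ω ω' => by simp only [Prod.mk.injEq]; tauto
  have r3 : margEnt p (fun ω => ((bS ω, bU ω), (bT ω, bV ω), bW ω)) =
      margEnt p (fun ω => (bS ω, bT ω, bW ω, bU ω, bV ω)) :=
    margEnt_congr _ _ _ fun ω ω' => by simp only [Prod.mk.injEq]; tauto
  have r4 : margEnt p (fun ω => ((bS ω, bU ω), bY1 ω, bW ω)) =
      margEnt p (fun ω => (bS ω, bW ω, bU ω, bY1 ω)) :=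
    margEnt_congr _ _ _ fun ω ω' => by simp only [Prod.mk.injEq]; tauto
  have r5 : margEnt p (fun ω => ((bT ω, bV ω), bY2 ω, bW ω)) =
      margEnt p (fun ω => (bT ω, bW ω, bV ω, bY2 ω)) :=
    margEnt_congr _ _ _ fun ω ω' => by simp only [Prod.mk.injEq]; tauto
  have r6 : margEnt p (fun ω => (bY1 ω, bW ω)) = margEnt p (fun ω => (bW ω, bY1 ω)) :=
    margEnt_congr _ _ _ fun ω ω' => by simp only [Prod.mk.injEq]; tauto
  have r7 : margEnt p (fun ω => (bY2 ω, bW ω)) = margEnt p (fun ω => (bW ω, bY2 ω)) :=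
    margEnt_congr _ _ _ fun ω ω' => by simp only [Prod.mk.injEq]; tauto
  have r8 : margEnt p (fun ω => ((bS ω, bW ω, bU ω), bY1 ω)) =
      margEnt p (fun ω => (bS ω, bW ω, bU ω, bY1 ω)) :=
    margEnt_congr _ _ _ fun ω ω' => by simp only [Prod.mk.injEq]; tauto
  have r9 : margEnt p (fun ω => ((bT ω, bW ω, bV ω), bY2 ω)) =
      margEnt p (fun ω => (bT ω, bW ω, bV ω, bY2 ω)) :=
    margEnt_congr _ _ _ fun ω ω' => by simp only [Prod.mk.injEq]; tauto
  have r10 : margEnt p (fun ω => ((bS ω, bT ω), bW ω)) = margEnt p (fun ω => (bS ω, bT ω, bW ω)) :=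
    margEnt_congr _ _ _ fun ω ω' => by simp only [Prod.mk.injEq]; tauto
  have h3a := h3.trans_le (add_le_add_left (add_le_add_left (add_le_add_left (min_le_left _ _) _) _)
    (-_))
  have h3b := h3.trans_le (add_le_add_left (add_le_add_left (add_le_add_left (min_le_right _ _) _) _)
    (-_))
  unfold mi cmi at h3a h3b h4
  rw [r1, r2, r3, r4, r5, r6, r7] at h3a h3b
  rw [r1, r2, r3, r8, r9, r10] at h4
  obtain ⟨R0, R1, R2, δ, hδ, c0, c1, c2, c12, d1, e1, d2, e2⟩ := exists_rates
    (a0 := margEnt p (fun ω => (bS ω, bT ω)) + margEnt p bW -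
      margEnt p (fun ω => (bS ω, bT ω, bW ω)))
    (a1 := margEnt p (fun ω => (bS ω, bT ω)) + margEnt p bW -
      margEnt p (fun ω => (bS ω, bT ω, bW ω, bU ω)) +
      margEnt p (fun ω => (bS ω, bW ω, bU ω)) - margEnt p (fun ω => (bS ω, bW ω)))
    (a2 := margEnt p (fun ω => (bS ω, bT ω)) + margEnt p bW -
      margEnt p (fun ω => (bS ω, bT ω, bW ω, bV ω)) +
      margEnt p (fun ω => (bT ω, bW ω, bV ω)) - margEnt p (fun ω => (bT ω, bW ω)))
    (a12 := margEnt p (fun ω => (bS ω, bT ω)) + margEnt p bW -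
      margEnt p (fun ω => (bS ω, bT ω, bW ω, bU ω, bV ω)) +
      margEnt p (fun ω => (bS ω, bW ω, bU ω)) - margEnt p (fun ω => (bS ω, bW ω)) +
      margEnt p (fun ω => (bT ω, bW ω, bV ω)) - margEnt p (fun ω => (bT ω, bW ω)))
    (d1 := margEnt p (fun ω => (bW ω, bY1 ω)) + margEnt p (fun ω => (bS ω, bW ω, bU ω)) -
      margEnt p (fun ω => (bS ω, bW ω)) - margEnt p (fun ω => (bS ω, bW ω, bU ω, bY1 ω)))
    (e1 := margEnt p bY1 + margEnt p bW + margEnt p (fun ω => (bS ω, bW ω, bU ω)) -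
      margEnt p (fun ω => (bS ω, bW ω)) - margEnt p (fun ω => (bS ω, bW ω, bU ω, bY1 ω)))
    (d2 := margEnt p (fun ω => (bW ω, bY2 ω)) + margEnt p (fun ω => (bT ω, bW ω, bV ω)) -
      margEnt p (fun ω => (bT ω, bW ω)) - margEnt p (fun ω => (bT ω, bW ω, bV ω, bY2 ω)))
    (e2 := margEnt p bY2 + margEnt p bW + margEnt p (fun ω => (bT ω, bW ω, bV ω)) -
      margEnt p (fun ω => (bT ω, bW ω)) - margEnt p (fun ω => (bT ω, bW ω, bV ω, bY2 ω)))
    (by linarith) (by linarith) (by linarith) (by linarith) (by linarith)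
  refine sendable_of_rates pST hpSTnn hpSTsum chan hchannn hchansum pWUV hpWUVnn hpWUVsum pX hpXnn
    hpXsum p hp hp0 hp1 (law p bW)
    (fun s w u => law p (fun ω => (bS ω, bW ω, bU ω)) (s, w, u) /
      law p (fun ω => (bS ω, bW ω)) (s, w))
    (fun t w v => law p (fun ω => (bT ω, bW ω, bV ω)) (t, w, v) /
      law p (fun ω => (bT ω, bW ω)) (t, w))
    (fun _ => law_nonneg hp0 _ _)
    (fun _ _ _ => div_nonneg (law_nonneg hp0 _ _) (law_nonneg hp0 _ _))
    (fun _ _ _ => div_nonneg (law_nonneg hp0 _ _) (law_nonneg hp0 _ _))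
    ((sum_law p bW).trans hp1).le (satellite_law_sum _ _ _) (satellite_law_sum _ _ _)
    (fun s w u y => law p (fun ω => (bS ω, bW ω, bU ω, bY1 ω)) (s, w, u, y) /
      law p (fun ω => (bW ω, bY1 ω)) (w, y))
    (fun s w u y => law p (fun ω => (bS ω, bW ω, bU ω, bY1 ω)) (s, w, u, y) / law p bY1 y)
    (fun t w v y => law p (fun ω => (bT ω, bW ω, bV ω, bY2 ω)) (t, w, v, y) /
      law p (fun ω => (bW ω, bY2 ω)) (w, y))
    (fun t w v y => law p (fun ω => (bT ω, bW ω, bV ω, bY2 ω)) (t, w, v, y) / law p bY2 y)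
    (fun _ _ _ _ => div_nonneg (law_nonneg hp0 _ _) (law_nonneg hp0 _ _))
    (fun _ _ _ _ => div_nonneg (law_nonneg hp0 _ _) (law_nonneg hp0 _ _))
    (fun _ _ _ _ => div_nonneg (law_nonneg hp0 _ _) (law_nonneg hp0 _ _))
    (fun _ _ _ _ => div_nonneg (law_nonneg hp0 _ _) (law_nonneg hp0 _ _))
    (satellite_test_law_sum _ _ _ _) (cloud_test_law_sum _ _ _ _)
    (satellite_test_law_sum _ _ _ _) (cloud_test_law_sum _ _ _ _)
    (fun ω h => ⟨pW ω h, pQ1 ω h, pQ2 ω h,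
      div_pos (law_pos hp0 (fun ω => (bS ω, bW ω, bU ω, bY1 ω)) h)
        (law_pos hp0 (fun ω => (bW ω, bY1 ω)) h),
      div_pos (law_pos hp0 (fun ω => (bS ω, bW ω, bU ω, bY1 ω)) h) (law_pos hp0 bY1 h),
      div_pos (law_pos hp0 (fun ω => (bT ω, bW ω, bV ω, bY2 ω)) h)
        (law_pos hp0 (fun ω => (bW ω, bY2 ω)) h),
      div_pos (law_pos hp0 (fun ω => (bT ω, bW ω, bV ω, bY2 ω)) h) (law_pos hp0 bY2 h)⟩)
    R0 R1 R2 δ hδ ?_ ?_ ?_ ?_ ?_ ?_ ?_ ?_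
  · rw [mean_congr hp0 _ _ fun ω h => by rw [g0 ω h]]
    simp only [margEnt_eq, mul_sub, Finset.sum_sub_distrib] at c0 ⊢
    linarith
  · rw [mean_congr hp0 _ _ fun ω h => by
      rw [g1 ω h, Real.logb_mul (pW ω h).ne' (pQ1 ω h).ne', lQ1 ω h]]
    simp only [margEnt_eq, mul_sub, mul_add, Finset.sum_sub_distrib, Finset.sum_add_distrib] at c1 ⊢
    linarith
  · rw [mean_congr hp0 _ _ fun ω h => by
      rw [g2 ω h, Real.logb_mul (pW ω h).ne' (pQ2 ω h).ne', lQ2 ω h]]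
    simp only [margEnt_eq, mul_sub, mul_add, Finset.sum_sub_distrib, Finset.sum_add_distrib] at c2 ⊢
    linarith
  · rw [mean_congr hp0 _ _ fun ω h => by
      rw [g12 ω h, Real.logb_mul (pW ω h).ne' (mul_pos (pQ1 ω h) (pQ2 ω h)).ne',
        Real.logb_mul (pQ1 ω h).ne' (pQ2 ω h).ne', lQ1 ω h, lQ2 ω h]]
    simp only [margEnt_eq, mul_sub, mul_add, Finset.sum_sub_distrib, Finset.sum_add_distrib]
      at c12 ⊢
    linarith
  · rw [satellite_test_mean _ _ _ _ hp0]
    linarith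
  · rw [cloud_test_mean _ _ _ _ hp0]
    linarith
  · rw [satellite_test_mean _ _ _ _ hp0]
    linarith
  · rw [cloud_test_mean _ _ _ _ hp0]
    linarith
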